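/- arXiv:2001.01674 — 2 statements merged into one kernel-verified Lean document; each statement's English description precedes it below -/
import Mathlib

section
/- Let n ≥ 2 and q ∈ [1,∞). There is a constant C such that for all g ∈ L¹(𝕊^{n-1}, dσ), ( ∫_{𝕊^{n-1}} ( sup_{v ∈ ⟨ω⟩^⊥} X(|ĝdσ|²)(ω,v) )^q dσ(ω) )^{1/q} ≤ C ‖ x ↦ (|g|dσ)^∧(x) · |x|^{1/2 − n/(2q)} ‖_{L^{2q,2}(ℝⁿ)}², where (|g|dσ)^∧ denotes the Fourier extension of |g|. -/
open MeasureTheory Metric Real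
open scoped ENNReal NNReal RealInnerProductSpace

noncomputable section

abbrev Euc (n : ℕ) := EuclideanSpace ℝ (Fin n)

/-- Surface measure on the unit sphere `𝕊^{n-1}`. -/
def sphMeasure (n : ℕ) : Measure (Euc n) :=
  (μH[(n : ℝ) - 1]).restrict (sphere (0 : Euc n) 1)

/-- Fourier extension operator. -/
def extOp (n : ℕ) (g : Euc n → ℂ) (x : Euc n) : ℂ :=
  ∫ ξ, Complex.exp (Complex.I * (⟪x, ξ⟫ : ℝ)) * g ξ ∂(sphMeasure n)

/-- X-ray transform of an `ℝ≥0∞`-valued function. -/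
def xrayT (n : ℕ) (f : Euc n → ℝ≥0∞) (ω v : Euc n) : ℝ≥0∞ :=
  ∫⁻ s : ℝ, f (v + s • ω)

/-- Squared modulus, valued in `[0,∞]`. -/
def sqe (z : ℂ) : ℝ≥0∞ := (‖z‖₊ : ℝ≥0∞) ^ 2

/-- The Lorentz norm `‖F‖_{L^{q,r}(μ)} = (q ∫₀^∞ λ^r μ{|F|>λ}^{r/q} dλ/λ)^{1/r}`. -/
def lorentzNorm {α : Type*} [MeasurableSpace α] (μ : Measure α) (q r : ℝ)
    (F : α → ℂ) : ℝ≥0∞ :=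
  (ENNReal.ofReal q *
      ∫⁻ l in Set.Ioi (0 : ℝ),
        ENNReal.ofReal l ^ r * μ {x | l < ‖F x‖} ^ (r / q) / ENNReal.ofReal l) ^ (1 / r)


/-- The affine chart of the cube face. -/
def cubePt (m : ℕ) (i : Fin (m + 1)) (y : Fin m → ℝ) : Euc (m + 1) :=
  WithLp.toLp 2 (i.insertNth (α := fun _ => ℝ) 1 y)

/-- Radial projection of the cube face to the sphere. -/
def sphPt (m : ℕ) (i : Fin (m + 1)) (e : ℤˣ) (y : Fin m → ℝ) : Euc (m + 1) :=
  (((e : ℤ) : ℝ) * ‖cubePt m i y‖)⁻¹ • cubePt m i y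

lemma one_le_norm_cubePt (m : ℕ) (i : Fin (m + 1)) (y : Fin m → ℝ) : 1 ≤ ‖cubePt m i y‖ := by
  have := PiLp.norm_apply_le (cubePt m i y) i
  simpa [cubePt] using this

lemma lip_cubePt (m : ℕ) : ∃ K : ℝ≥0, ∀ i, LipschitzWith K (cubePt m i) := by
  refine ⟨_, fun i => (PiLp.lipschitzWith_toLp 2 (fun _ : Fin (m+1) => ℝ)).comp
    (LipschitzWith.of_dist_le_mul (K := 1) fun y z => ?_)⟩
  simp only [NNReal.coe_one, one_mul]
  rw [dist_pi_le_iff dist_nonneg]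
  intro j
  induction j using Fin.succAboveCases i with
  | x => simp
  | p j => simpa using dist_le_pi_dist y z j

lemma norm_normalize_sub_le {E : Type*} [NormedAddCommGroup E] [NormedSpace ℝ E] (x y : E)
    (hx : 1 ≤ ‖x‖) (hy : 1 ≤ ‖y‖) : ‖‖x‖⁻¹ • x - ‖y‖⁻¹ • y‖ ≤ 2 * ‖x - y‖ := by
  have hx0 : 0 < ‖x‖ := by linarith
  have hy0 : 0 < ‖y‖ := by linarith
  have e : ‖x‖⁻¹ • x - ‖y‖⁻¹ • y = ‖x‖⁻¹ • (x - y) + (‖x‖⁻¹ * (‖y‖ - ‖x‖)) • (‖y‖⁻¹ • y) := by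
    have : ‖x‖⁻¹ * (‖y‖ - ‖x‖) * ‖y‖⁻¹ = ‖x‖⁻¹ - ‖y‖⁻¹ := by field_simp
    rw [smul_smul, this, smul_sub, sub_smul]; abel
  have hi : ‖x‖⁻¹ ≤ 1 := inv_le_one_of_one_le₀ hx
  have hu : ‖‖y‖⁻¹ • y‖ = 1 := by
    rw [norm_smul, norm_inv, norm_norm, inv_mul_cancel₀ hy0.ne']
  rw [e]
  refine (norm_add_le _ _).trans ?_
  rw [norm_smul, norm_smul, hu, norm_mul, norm_inv, norm_norm, Real.norm_eq_abs]
  have h1 := abs_norm_sub_norm_le y x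
  rw [norm_sub_rev y x] at h1
  have := mul_le_mul hi h1 (abs_nonneg _) zero_le_one
  have := mul_le_mul_of_nonneg_right hi (norm_nonneg (x - y))
  linarith

lemma lip_sphPt (m : ℕ) : ∃ K : ℝ≥0, ∀ i e, LipschitzWith K (sphPt m i e) := by
  obtain ⟨K, hK⟩ := lip_cubePt m
  refine ⟨2 * K, fun i e => LipschitzWith.of_dist_le_mul fun y z => ?_⟩
  have h := norm_normalize_sub_le _ _ (one_le_norm_cubePt m i y) (one_le_norm_cubePt m i z)
  have h2 := (hK i).dist_le_mul y z
  rw [dist_eq_norm] at h2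
  have h3 : dist (sphPt m i e y) (sphPt m i e z) =
      ‖‖cubePt m i y‖⁻¹ • cubePt m i y - ‖cubePt m i z‖⁻¹ • cubePt m i z‖ := by
    rw [dist_eq_norm]
    rcases Int.units_eq_one_or e with rfl | rfl
    · simp [sphPt]
    · simp only [sphPt, Units.val_neg, Units.val_one, Int.cast_neg, Int.cast_one, neg_mul, one_mul,
        inv_neg, neg_smul]
      rw [← norm_neg]; congr 1; abel
  rw [h3]
  push_cast
  linarith

lemma exists_sphPt (m : ℕ) (ω : Euc (m + 1)) (hω : ‖ω‖ = 1) :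
    ∃ i e, ∃ y ∈ Metric.closedBall (0 : Fin m → ℝ) 1, sphPt m i e y = ω := by
  obtain ⟨i, hi⟩ := Finite.exists_max (fun i => |ω i|)
  have h0 : ω i ≠ 0 := by
    intro h
    have : ω = 0 := by
      ext j
      have := hi j
      simp only [h, abs_zero] at this
      simpa using this
    simp [this] at hω
  have hc : ∀ y : Fin m → ℝ, y = (fun j => ω (i.succAbove j) / ω i) →
      cubePt m i y = (ω i)⁻¹ • ω := by
    rintro y rfl
    ext j
    induction j using Fin.succAboveCases i with
    | x => simp [cubePt, h0]
    | p j => simp [cubePt, div_eq_inv_mul]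
  refine ⟨i, if 0 < ω i then 1 else -1, fun j => ω (i.succAbove j) / ω i, ?_, ?_⟩
  · rw [mem_closedBall_zero_iff, pi_norm_le_iff_of_nonneg zero_le_one]
    intro j
    rw [norm_div, Real.norm_eq_abs, Real.norm_eq_abs, div_le_one (abs_pos.2 h0)]
    exact hi _
  · rw [sphPt, hc _ rfl, norm_smul, hω, smul_smul]
    convert one_smul ℝ ω using 2
    rw [norm_inv, Real.norm_eq_abs]
    split_ifs with h
    · rw [abs_of_pos h]; simp [h0]
    · rw [abs_of_nonpos (not_lt.1 h)]
      push_cast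
      field_simp

lemma sph_le (m : ℕ) : ∃ K : ℝ≥0, sphMeasure (m + 1) ≤ (K : ℝ≥0∞) •
    ∑ p : Fin (m + 1) × ℤˣ,
      (volume.restrict (Metric.closedBall (0 : Fin m → ℝ) 1)).map (sphPt m p.1 p.2) := by
  obtain ⟨K, hK⟩ := lip_sphPt m
  refine ⟨K ^ m, Measure.le_iff.2 fun A hA => ?_⟩
  rw [sphMeasure, Measure.restrict_apply hA]
  simp only [Measure.smul_apply, Measure.finsetSum_apply, smul_eq_mul]
  rw [Finset.mul_sum]
  have hsub : A ∩ sphere (0 : Euc (m + 1)) 1 ⊆ ⋃ p : Fin (m + 1) × ℤˣ,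
      sphPt m p.1 p.2 '' ((sphPt m p.1 p.2) ⁻¹' A ∩ Metric.closedBall 0 1) := by
    rintro ω ⟨hωA, hω⟩
    obtain ⟨i, e, y, hy, rfl⟩ := exists_sphPt m ω (by simpa using hω)
    exact Set.mem_iUnion.2 ⟨(i, e), y, ⟨hωA, hy⟩, rfl⟩
  refine (measure_mono hsub).trans ((measure_iUnion_le _).trans ?_)
  rw [tsum_fintype]
  refine Finset.sum_le_sum fun p _ => ?_
  rw [Measure.map_apply (hK p.1 p.2).continuous.measurable hA,
    Measure.restrict_apply ((hK p.1 p.2).continuous.measurable hA)]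
  have hd : (((m + 1 : ℕ) : ℝ) - 1) = (Fintype.card (Fin m) : ℝ) := by simp
  rw [hd]
  refine ((hK p.1 p.2).hausdorffMeasure_image_le (Nat.cast_nonneg _) _).trans ?_
  rw [hausdorffMeasure_pi_real]
  simp

instance isFinite_sph (m : ℕ) : IsFiniteMeasure (sphMeasure (m + 1)) := by
  obtain ⟨K, hK⟩ := sph_le m
  refine ⟨(hK _).trans_lt ?_⟩
  obtain ⟨L, hL⟩ := lip_sphPt m
  simp only [Measure.smul_apply, Measure.finsetSum_apply, smul_eq_mul]
  refine ENNReal.mul_lt_top ENNReal.coe_lt_top (ENNReal.sum_lt_top.2 fun p _ => ?_)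
  rw [Measure.map_apply (hL p.1 p.2).continuous.measurable MeasurableSet.univ]
  simp only [Set.preimage_univ, Measure.restrict_apply_univ]
  exact measure_closedBall_lt_top

lemma lintegral_smul_real {E : Type*} [NormedAddCommGroup E] [NormedSpace ℝ E]
    [MeasurableSpace E] [BorelSpace E] [FiniteDimensional ℝ E] (μ : Measure E)
    [μ.IsAddHaarMeasure] (f : E → ℝ≥0∞) (hf : Measurable f) {c : ℝ} (hc : c ≠ 0) :
    ‖c‖ₑ ^ (Module.finrank ℝ E) * ∫⁻ x, f (c • x) ∂μ = ∫⁻ x, f x ∂μ := by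
  have h := Measure.map_addHaar_smul μ hc
  have h2 : ∫⁻ x, f (c • x) ∂μ = ∫⁻ x, f x ∂(Measure.map (c • ·) μ) := by
    rw [lintegral_map hf (by fun_prop)]
  rw [h2, h, lintegral_smul_measure, smul_eq_mul, ← mul_assoc]
  have : ‖c‖ₑ ^ (Module.finrank ℝ E) * ENNReal.ofReal |(c ^ Module.finrank ℝ E)⁻¹| = 1 := by
    rw [← Real.enorm_eq_ofReal_abs, enorm_inv (pow_ne_zero _ hc), enorm_pow]
    apply ENNReal.mul_inv_cancel <;> simp [hc]
  rw [this, one_mul]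

lemma chart_fubini (m : ℕ) (i : Fin (m + 1)) (f : Euc (m + 1) → ℝ≥0∞) (hf : Measurable f) :
    ∫⁻ y, ∫⁻ t : ℝ, f (t • cubePt m i y) * ‖t‖ₑ ^ m = ∫⁻ x, f x := by
  obtain ⟨K, hK⟩ := lip_cubePt m
  have hcm : Measurable (cubePt m i) := (hK i).continuous.measurable
  rw [lintegral_lintegral_swap (by
    apply Measurable.aemeasurable
    simp only [Function.uncurry_def]
    fun_prop)]
  rw [← (PiLp.volume_preserving_toLp (Fin (m+1))).lintegral_comp hf]
  rw [← ((volume_preserving_piFinSuccAbove (fun _ : Fin (m+1) => ℝ) i).symm).lintegral_comp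
    (by fun_prop)]
  rw [Measure.volume_eq_prod, lintegral_prod _ (by
    apply Measurable.aemeasurable
    fun_prop)]
  refine lintegral_congr_ae ?_
  have h0 : ∀ᵐ t : ℝ, t ≠ 0 := by
    simp [ae_iff]
  filter_upwards [h0] with t ht
  have := lintegral_smul_real (volume : Measure (Fin m → ℝ))
    (fun z => f (WithLp.toLp 2 ((MeasurableEquiv.piFinSuccAbove (fun _ : Fin (m+1) => ℝ) i).symm (t, z))))
    (by fun_prop) ht
  rw [← this, lintegral_mul_const _ (by fun_prop), mul_comm]
  simp only [Module.finrank_fintype_fun_eq_card, Fintype.card_fin]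
  congr 1
  refine lintegral_congr fun y => ?_
  congr 1
  ext j
  induction j using Fin.succAboveCases i with
  | x => simp [cubePt]
  | p j => simp [cubePt]

lemma norm_cubePt_le (m : ℕ) : ∃ R : ℝ≥0, ∀ i, ∀ y ∈ Metric.closedBall (0 : Fin m → ℝ) 1,
    ‖cubePt m i y‖ₑ ≤ R := by
  obtain ⟨K, hK⟩ := lip_cubePt m
  have : ∀ i, ∃ R : ℝ≥0, ∀ y ∈ Metric.closedBall (0 : Fin m → ℝ) 1, ‖cubePt m i y‖₊ ≤ R := by
    intro i
    obtain ⟨C, hC⟩ := (isCompact_closedBall (0 : Fin m → ℝ) 1).exists_bound_of_continuousOn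
      (hK i).continuous.continuousOn
    refine ⟨C.toNNReal, fun y hy => ?_⟩
    exact NNReal.le_toNNReal_of_coe_le (hC y hy)
  choose R hR using this
  refine ⟨∑ i, R i, fun i y hy => ?_⟩
  rw [enorm_eq_nnnorm]
  exact_mod_cast (hR i y hy).trans (Finset.single_le_sum (fun _ _ => zero_le) (Finset.mem_univ i))

lemma polar_le (m : ℕ) : ∃ C : ℝ≥0, ∀ f : Euc (m + 1) → ℝ≥0∞, Measurable f →
    ∫⁻ ω, (∫⁻ s : ℝ, f (s • ω) * ‖s‖ₑ ^ m) ∂(sphMeasure (m + 1)) ≤ C * ∫⁻ x, f x := by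
  obtain ⟨K, hK⟩ := sph_le m
  obtain ⟨R, hR⟩ := norm_cubePt_le m
  refine ⟨K * ∑ p : Fin (m + 1) × ℤˣ, R ^ (m + 1), fun f hf => ?_⟩
  refine (lintegral_mono' hK le_rfl).trans ?_
  rw [lintegral_smul_measure, lintegral_finsetSum_measure, smul_eq_mul]
  push_cast
  rw [mul_assoc, Finset.sum_mul]
  gcongr with p hp
  refine (lintegral_map_le _ _).trans ?_
  have key : ∀ y ∈ Metric.closedBall (0 : Fin m → ℝ) 1,
      ∫⁻ s : ℝ, f (s • sphPt m p.1 p.2 y) * ‖s‖ₑ ^ m ≤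
        (R : ℝ≥0∞) ^ (m + 1) * ∫⁻ t : ℝ, f (t • cubePt m p.1 y) * ‖t‖ₑ ^ m := by
    intro y hy
    have h1 := one_le_norm_cubePt m p.1 y
    set c : ℝ := ((p.2 : ℤ) : ℝ) * ‖cubePt m p.1 y‖ with hc
    have hce : ‖c‖ₑ = ‖cubePt m p.1 y‖ₑ := by
      rw [hc]
      rcases Int.units_eq_one_or p.2 with h | h <;> simp [h]
    have hc0 : c ≠ 0 := by
      rw [← enorm_ne_zero, hce, enorm_ne_zero, ← norm_ne_zero_iff]; linarith
    rw [← lintegral_smul_real volume _ (by fun_prop) hc0]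
    simp only [Module.finrank_self, pow_one, smul_eq_mul, sphPt, smul_smul]
    rw [← hc]
    have : ∀ s : ℝ, c * s * c⁻¹ = s := fun s => by field_simp
    simp_rw [this, enorm_mul, mul_pow, hce]
    calc _ = ‖cubePt m p.1 y‖ₑ ^ (m + 1) * ∫⁻ t : ℝ, f (t • cubePt m p.1 y) * ‖t‖ₑ ^ m := by
          rw [← lintegral_const_mul _ (by fun_prop), ← lintegral_const_mul _ (by fun_prop)]
          refine lintegral_congr fun t => by ring
      _ ≤ _ := by
          gcongr
          exact hR _ y hy
  calc _ ≤ ∫⁻ y in Metric.closedBall (0 : Fin m → ℝ) 1,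
        (R : ℝ≥0∞) ^ (m + 1) * ∫⁻ t : ℝ, f (t • cubePt m p.1 y) * ‖t‖ₑ ^ m :=
        setLIntegral_mono' measurableSet_closedBall key
    _ ≤ ∫⁻ y, (R : ℝ≥0∞) ^ (m + 1) * ∫⁻ t : ℝ, f (t • cubePt m p.1 y) * ‖t‖ₑ ^ m :=
        setLIntegral_le_lintegral _ _
    _ = _ := by
        rw [lintegral_const_mul' _ _ (by simp), chart_fubini m p.1 f hf]

lemma norm_exp_I_mul (t : ℝ) : ‖Complex.exp (Complex.I * (t : ℂ))‖ = 1 := by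
  rw [mul_comm]; exact Complex.norm_exp_ofReal_mul_I t

lemma gauss_formula {X : Type*} [MeasurableSpace X] (σ : Measure X) [SFinite σ] (a : X → ℝ)
    (ha : Measurable a) (h : X → ℂ) (hh : Integrable h σ) (b : ℝ) (hb : 0 < b) :
    ((∫ s : ℝ, rexp (-b * s ^ 2) * ‖∫ ξ, Complex.exp (Complex.I * ((s * a ξ : ℝ) : ℂ)) * h ξ ∂σ‖ ^ 2
      : ℝ) : ℂ) = ∫ z, h z.1 * (starRingEnd ℂ) (h z.2) *
        ((√(π / b) * rexp (-(a z.1 - a z.2) ^ 2 / (4 * b)) : ℝ) : ℂ) ∂(σ.prod σ) := by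
  have hg : Integrable (fun s : ℝ => (rexp (-b * s ^ 2) : ℂ)) := (integrable_exp_neg_mul_sq hb).ofReal
  have hP : Integrable (fun z : X × X => h z.1 * (starRingEnd ℂ) (h z.2)) (σ.prod σ) := by
    have h2 : Integrable (fun x => (starRingEnd ℂ) (h x)) σ :=
      hh.congr' (Complex.continuous_conj.comp_aestronglyMeasurable hh.1) (by simp)
    exact hh.mul_prod h2
  have hF : Integrable (Function.uncurry fun (s : ℝ) (z : X × X) =>
      Complex.exp (Complex.I * ((s * (a z.1 - a z.2) : ℝ) : ℂ)) *
        ((rexp (-b * s ^ 2) : ℂ) * (h z.1 * (starRingEnd ℂ) (h z.2))))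
      (volume.prod (σ.prod σ)) := by
    refine (hg.mul_prod hP).bdd_mul (c := 1) ?_ ?_
    · apply Measurable.aestronglyMeasurable
      fun_prop
    · exact Filter.Eventually.of_forall fun z => (norm_exp_I_mul _).le
  rw [← integral_complex_ofReal]
  have e1 : ∀ s : ℝ, ((rexp (-b * s ^ 2) *
      ‖∫ ξ, Complex.exp (Complex.I * ((s * a ξ : ℝ) : ℂ)) * h ξ ∂σ‖ ^ 2 : ℝ) : ℂ) =
      ∫ z, Complex.exp (Complex.I * ((s * (a z.1 - a z.2) : ℝ) : ℂ)) *
        ((rexp (-b * s ^ 2) : ℂ) * (h z.1 * (starRingEnd ℂ) (h z.2))) ∂(σ.prod σ) := by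
    intro s
    push_cast
    rw [← Complex.mul_conj', ← integral_conj, ← integral_prod_mul, ← integral_const_mul]
    refine integral_congr_ae (Filter.Eventually.of_forall fun z => ?_)
    simp only [map_mul, ← Complex.exp_conj, Complex.conj_I, Complex.conj_ofReal]
    have : Complex.exp (Complex.I * (s * (a z.1 - a z.2))) = Complex.exp (Complex.I * (s * a z.1)) *
        Complex.exp (-Complex.I * (s * a z.2)) := by
      rw [← Complex.exp_add]; congr 1; ring
    rw [this]; ring
  simp_rw [e1]
  rw [integral_integral_swap hF]
  refine integral_congr_ae (Filter.Eventually.of_forall fun z => ?_)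
  simp only
  have e2 := fourierIntegral_gaussian (b := (b : ℂ)) (by simpa using hb) ((a z.1 - a z.2 : ℝ) : ℂ)
  have e3 : ((π : ℂ) / b) ^ (1 / 2 : ℂ) * Complex.exp (-((a z.1 - a z.2 : ℝ) : ℂ) ^ 2 / (4 * b)) =
      ((√(π / b) * rexp (-(a z.1 - a z.2) ^ 2 / (4 * b)) : ℝ) : ℂ) := by
    rw [Real.sqrt_eq_rpow]
    push_cast
    rw [Complex.ofReal_cpow (by positivity)]
    push_cast
    rfl
  rw [← e3, ← e2, mul_comm (h z.1 * _), ← integral_mul_const]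
  refine integral_congr_ae (Filter.Eventually.of_forall fun s => ?_)
  push_cast
  have : Complex.I * ((s : ℂ) * (a z.1 - a z.2)) = Complex.I * (a z.1 - a z.2) * s := by ring
  simp only [this]
  ring

lemma majorant {X : Type*} [MeasurableSpace X] (σ : Measure X) [SFinite σ] (a : X → ℝ)
    (ha : Measurable a) (h : X → ℂ) (hh : Integrable h σ) :
    ∫⁻ s : ℝ, ‖∫ ξ, Complex.exp (Complex.I * ((s * a ξ : ℝ) : ℂ)) * h ξ ∂σ‖ₑ ^ 2 ≤
    ∫⁻ s : ℝ, ‖∫ ξ, Complex.exp (Complex.I * ((s * a ξ : ℝ) : ℂ)) * ((‖h ξ‖ : ℝ) : ℂ) ∂σ‖ₑ ^ 2 := by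
  have hcont : ∀ k : X → ℂ, Integrable k σ → Continuous fun s : ℝ =>
      ∫ ξ, Complex.exp (Complex.I * ((s * a ξ : ℝ) : ℂ)) * k ξ ∂σ := by
    intro k hk
    refine continuous_of_dominated (bound := fun ξ => ‖k ξ‖) ?_ ?_ hk.norm ?_
    · intro s
      exact (Measurable.aestronglyMeasurable (by fun_prop)).mul hk.1
    · intro s
      refine Filter.Eventually.of_forall fun ξ => ?_
      rw [norm_mul, norm_exp_I_mul, one_mul]
    · refine Filter.Eventually.of_forall fun ξ => ?_
      fun_prop
  have hbd : ∀ k : X → ℂ, Integrable k σ → ∀ s : ℝ,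
      ‖∫ ξ, Complex.exp (Complex.I * ((s * a ξ : ℝ) : ℂ)) * k ξ ∂σ‖ ≤ ∫ ξ, ‖k ξ‖ ∂σ := by
    intro k hk s
    refine (norm_integral_le_integral_norm _).trans (le_of_eq ?_)
    refine integral_congr_ae (Filter.Eventually.of_forall fun ξ => ?_)
    simp only [norm_mul, norm_exp_I_mul, one_mul]
  have hint : ∀ k : X → ℂ, Integrable k σ → ∀ b : ℝ, 0 < b → Integrable fun s : ℝ =>
      rexp (-b * s ^ 2) * ‖∫ ξ, Complex.exp (Complex.I * ((s * a ξ : ℝ) : ℂ)) * k ξ ∂σ‖ ^ 2 := by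
    intro k hk b hb
    refine (integrable_exp_neg_mul_sq hb).mul_bdd (c := (∫ ξ, ‖k ξ‖ ∂σ) ^ 2) ?_ ?_
    · exact ((hcont k hk).norm.pow 2).aestronglyMeasurable
    · refine Filter.Eventually.of_forall fun s => ?_
      rw [norm_pow, norm_norm]
      exact pow_le_pow_left₀ (norm_nonneg _) (hbd k hk s) 2
  have hn : Integrable (fun ξ => ((‖h ξ‖ : ℝ) : ℂ)) σ := hh.norm.ofReal
  have hlin : ∀ k : X → ℂ, Integrable k σ → ∀ b : ℝ, 0 < b →
      ∫⁻ s : ℝ, ENNReal.ofReal (rexp (-b * s ^ 2)) *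
        ‖∫ ξ, Complex.exp (Complex.I * ((s * a ξ : ℝ) : ℂ)) * k ξ ∂σ‖ₑ ^ 2 =
      ENNReal.ofReal (∫ s : ℝ, rexp (-b * s ^ 2) *
        ‖∫ ξ, Complex.exp (Complex.I * ((s * a ξ : ℝ) : ℂ)) * k ξ ∂σ‖ ^ 2) := by
    intro k hk b hb
    rw [ofReal_integral_eq_lintegral_ofReal (hint k hk b hb)
      (Filter.Eventually.of_forall fun s => by positivity)]
    refine lintegral_congr fun s => ?_
    rw [ENNReal.ofReal_mul (by positivity), ENNReal.ofReal_pow (norm_nonneg _), ofReal_norm]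
  have key : ∀ b : ℝ, 0 < b →
      ∫⁻ s : ℝ, ENNReal.ofReal (rexp (-b * s ^ 2)) *
        ‖∫ ξ, Complex.exp (Complex.I * ((s * a ξ : ℝ) : ℂ)) * h ξ ∂σ‖ₑ ^ 2 ≤
      ∫⁻ s : ℝ, ‖∫ ξ, Complex.exp (Complex.I * ((s * a ξ : ℝ) : ℂ)) * ((‖h ξ‖ : ℝ) : ℂ) ∂σ‖ₑ ^ 2 := by
    intro b hb
    calc _ ≤ ∫⁻ s : ℝ, ENNReal.ofReal (rexp (-b * s ^ 2)) *
          ‖∫ ξ, Complex.exp (Complex.I * ((s * a ξ : ℝ) : ℂ)) * ((‖h ξ‖ : ℝ) : ℂ) ∂σ‖ₑ ^ 2 := by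
          rw [hlin h hh b hb, hlin _ hn b hb]
          apply ENNReal.ofReal_le_ofReal
          have f1 := gauss_formula σ a ha h hh b hb
          have f2 := gauss_formula σ a ha _ hn b hb
          set J1 := ∫ s : ℝ, rexp (-b * s ^ 2) *
            ‖∫ ξ, Complex.exp (Complex.I * ((s * a ξ : ℝ) : ℂ)) * h ξ ∂σ‖ ^ 2
          have f3 : ∀ z : X × X, ((‖h z.1‖ : ℝ) : ℂ) * (starRingEnd ℂ) ((‖h z.2‖ : ℝ) : ℂ) *
              ((√(π / b) * rexp (-(a z.1 - a z.2) ^ 2 / (4 * b)) : ℝ) : ℂ) =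
              ((‖h z.1 * (starRingEnd ℂ) (h z.2) *
                ((√(π / b) * rexp (-(a z.1 - a z.2) ^ 2 / (4 * b)) : ℝ) : ℂ)‖ : ℝ) : ℂ) := by
            intro z
            rw [norm_mul, norm_mul, Complex.norm_real, Real.norm_of_nonneg (by positivity),
              Complex.conj_ofReal, RCLike.norm_conj]
            push_cast
            rfl
          simp_rw [f3] at f2
          rw [integral_complex_ofReal, Complex.ofReal_inj] at f2
          rw [f2]
          calc J1 ≤ ‖(J1 : ℂ)‖ := by rw [Complex.norm_real]; exact le_abs_self _
            _ ≤ _ := by rw [f1]; exact norm_integral_le_integral_norm _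
      _ ≤ _ := by
          refine lintegral_mono fun s => ?_
          refine mul_le_of_le_one_left' ?_
          rw [ENNReal.ofReal_le_one, Real.exp_le_one_iff]
          nlinarith [sq_nonneg s]
  have lim : ∀ s : ℝ, Filter.liminf (fun k : ℕ => ENNReal.ofReal (rexp (-(1 / ((k : ℝ) + 1)) * s ^ 2)) *
        ‖∫ ξ, Complex.exp (Complex.I * ((s * a ξ : ℝ) : ℂ)) * h ξ ∂σ‖ₑ ^ 2) Filter.atTop =
        ‖∫ ξ, Complex.exp (Complex.I * ((s * a ξ : ℝ) : ℂ)) * h ξ ∂σ‖ₑ ^ 2 := by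
    intro s
    apply Filter.Tendsto.liminf_eq
    have t1 : Filter.Tendsto (fun k : ℕ => rexp (-(1 / ((k : ℝ) + 1)) * s ^ 2)) Filter.atTop
        (nhds 1) := by
      have := ((tendsto_one_div_add_atTop_nhds_zero_nat (𝕜 := ℝ)).neg.mul_const (s ^ 2))
      have := (Real.continuous_exp.tendsto _).comp this
      simpa [Function.comp_def] using this
    have t2 := ENNReal.tendsto_ofReal t1
    have t3 := ENNReal.Tendsto.mul_const (b := ‖∫ ξ, Complex.exp (Complex.I * ((s * a ξ : ℝ) : ℂ)) * h ξ ∂σ‖ₑ ^ 2)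
      t2 (Or.inl (by simp))
    simpa using t3
  calc _ = ∫⁻ s : ℝ, Filter.liminf (fun k : ℕ => ENNReal.ofReal (rexp (-(1 / ((k : ℝ) + 1)) * s ^ 2)) *
        ‖∫ ξ, Complex.exp (Complex.I * ((s * a ξ : ℝ) : ℂ)) * h ξ ∂σ‖ₑ ^ 2) Filter.atTop := by
        simp_rw [lim]
    _ ≤ Filter.liminf (fun k : ℕ => ∫⁻ s : ℝ, ENNReal.ofReal (rexp (-(1 / ((k : ℝ) + 1)) * s ^ 2)) *
        ‖∫ ξ, Complex.exp (Complex.I * ((s * a ξ : ℝ) : ℂ)) * h ξ ∂σ‖ₑ ^ 2) Filter.atTop := by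
        refine lintegral_liminf_le fun k => ?_
        have := (hcont h hh).measurable
        fun_prop
    _ ≤ _ := by
        refine Filter.liminf_le_of_le (by isBoundedDefault) fun c hc => ?_
        obtain ⟨k, hk⟩ := hc.exists
        exact hk.trans (key _ (by positivity))

lemma minkowski_aux {α β : Type*} [MeasurableSpace α] [MeasurableSpace β] (μ : Measure α)
    (ν : Measure β) [SFinite μ] [IsFiniteMeasure ν] (q : ℝ) (hq : 1 ≤ q)
    (f : α → β → ℝ≥0∞) (hf : Measurable (Function.uncurry f)) :
    (∫⁻ b, (∫⁻ a, f a b ∂μ) ^ q ∂ν) ^ (1 / q) ≤ ∫⁻ a, (∫⁻ b, f a b ^ q ∂ν) ^ (1 / q) ∂μ := by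
  have hq0 : 0 < q := by linarith
  rcases hq.eq_or_lt with rfl | hq1
  · simp only [ENNReal.rpow_one, div_one]
    rw [lintegral_lintegral_swap hf.aemeasurable]
  have hpq : q.HolderConjugate (q.conjExponent) := Real.HolderConjugate.conjExponent hq1
  set p := q.conjExponent
  have hm : ∀ a, Measurable (f a) := fun a => hf.of_uncurry_left
  have hfs : Measurable fun z : β × α => f z.2 z.1 := hf.comp measurable_swap
  set H : β → ℝ≥0∞ := fun b => ∫⁻ a, f a b ∂μ with hH
  have hHm : Measurable H := Measurable.lintegral_prod_right' (f := fun z : β × α => f z.2 z.1) hfs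
  set M := ∫⁻ a, (∫⁻ b, f a b ^ q ∂ν) ^ (1 / q) ∂μ with hM
  have main : ∀ N : ℕ, (∫⁻ b, (min (H b) N) ^ q ∂ν) ≤ M ^ q := by
    intro N
    set T := ∫⁻ b, (min (H b) N) ^ q ∂ν with hT
    have hTfin : T ≠ ⊤ := by
      refine ne_top_of_le_ne_top (b := (N : ℝ≥0∞) ^ q * ν Set.univ) ?_ ?_
      · exact ENNReal.mul_ne_top (ENNReal.rpow_ne_top_of_nonneg hq0.le (by simp)) (by simp)
      · rw [← lintegral_const]
        refine lintegral_mono fun b => ENNReal.rpow_le_rpow (min_le_right _ _) hq0.le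
    have hminm : Measurable fun b => (min (H b) N) ^ (q - 1) :=
      (hHm.min measurable_const).pow_const _
    have step : T ≤ M * T ^ (1 / p) := by
      calc T ≤ ∫⁻ b, H b * (min (H b) N) ^ (q - 1) ∂ν := by
            refine lintegral_mono fun b => ?_
            have : min (H b) N ^ q = min (H b) N * min (H b) N ^ (q - 1) := by
              conv_rhs => enter [1]; rw [← ENNReal.rpow_one (min (H b) N)]
              rw [← ENNReal.rpow_add_of_nonneg _ _ zero_le_one (by linarith)]
              congr 1; ring
            simp only [this]
            gcongr
            exact min_le_left _ _
        _ = ∫⁻ b, ∫⁻ a, f a b * (min (H b) N) ^ (q - 1) ∂μ ∂ν := by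
            refine lintegral_congr fun b => ?_
            exact (lintegral_mul_const _ (hf.comp (by fun_prop : Measurable fun a => (a, b)))).symm
        _ = ∫⁻ a, ∫⁻ b, f a b * (min (H b) N) ^ (q - 1) ∂ν ∂μ := by
            rw [lintegral_lintegral_swap]
            apply Measurable.aemeasurable
            exact hfs.mul (hminm.comp measurable_fst)
        _ ≤ ∫⁻ a, (∫⁻ b, f a b ^ q ∂ν) ^ (1 / q) * T ^ (1 / p) ∂μ := by
            refine lintegral_mono fun a => ?_
            refine (ENNReal.lintegral_mul_le_Lp_mul_Lq ν hpq (hm a).aemeasurable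
              hminm.aemeasurable).trans (le_of_eq ?_)
            congr 3
            ext b
            rw [← ENNReal.rpow_mul, hpq.sub_one_mul_conj]
        _ = M * T ^ (1 / p) := by
            rw [lintegral_mul_const']
            exact ENNReal.rpow_ne_top_of_nonneg (by have := hpq.symm.pos; positivity) hTfin
    rcases eq_or_ne T 0 with h0 | h0
    · rw [h0]; exact zero_le
    have hTeq : T = T ^ (1 / q) * T ^ (1 / p) := by
      rw [← ENNReal.rpow_add _ _ h0 hTfin]
      have := hpq.inv_add_inv_eq_one
      simp only [one_div, this, ENNReal.rpow_one]
    have hTp0 : T ^ (1 / p) ≠ 0 := by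
      simp [h0, hTfin]
    have hTpf : T ^ (1 / p) ≠ ⊤ :=
      ENNReal.rpow_ne_top_of_nonneg (by have := hpq.symm.pos; positivity) hTfin
    have h3 : T ^ (1 / q) ≤ M := by
      have step2 : T ^ (1 / q) * T ^ (1 / p) ≤ M * T ^ (1 / p) := hTeq ▸ step
      exact (ENNReal.mul_le_mul_iff_left hTp0 hTpf).1 step2
    calc T = (T ^ (1 / q)) ^ q := by
          rw [← ENNReal.rpow_mul, one_div_mul_cancel hq0.ne', ENNReal.rpow_one]
      _ ≤ M ^ q := ENNReal.rpow_le_rpow h3 hq0.le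
  have lim : ∫⁻ b, H b ^ q ∂ν = ⨆ N : ℕ, ∫⁻ b, (min (H b) N) ^ q ∂ν := by
    rw [← lintegral_iSup]
    · refine lintegral_congr fun b => ?_
      apply le_antisymm
      · have : Filter.Tendsto (fun N : ℕ => (min (H b) N) ^ q) Filter.atTop (nhds (H b ^ q)) := by
          apply (ENNReal.continuous_rpow_const.tendsto _).comp
          have := (tendsto_const_nhds (x := H b)).min ENNReal.tendsto_nat_nhds_top
          simpa using this
        exact le_of_tendsto' this fun N => le_iSup (fun N : ℕ => (min (H b) N) ^ q) N
      · exact iSup_le fun N => ENNReal.rpow_le_rpow (min_le_left _ _) hq0.le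
    · intro N
      exact (hHm.min measurable_const).pow_const _
    · intro N N' h b
      refine ENNReal.rpow_le_rpow (min_le_min_left _ (by exact_mod_cast h)) hq0.le
  rw [lim]
  calc _ ≤ (M ^ q) ^ (1 / q) := ENNReal.rpow_le_rpow (iSup_le main) (by positivity)
    _ = M := by rw [← ENNReal.rpow_mul, mul_one_div_cancel hq0.ne', ENNReal.rpow_one]

lemma unit_int_finite (r : ℝ) (hr : -1 < r) :
    ∫⁻ s in Set.Icc (-1 : ℝ) 1, ‖s‖ₑ ^ r ≠ ⊤ := by
  have h1 : ∫⁻ s in Set.Ioc (0 : ℝ) 1, ‖s‖ₑ ^ r ≠ ⊤ := by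
    have := (intervalIntegral.intervalIntegrable_rpow' (a := 0) (b := 1) hr)
    rw [intervalIntegrable_iff_integrableOn_Ioc_of_le zero_le_one] at this
    have h2 := this.lintegral_lt_top.ne
    rwa [setLIntegral_congr_fun measurableSet_Ioc (g := fun s => ‖s‖ₑ ^ r)] at h2
    intro s hs
    simp only
    rw [← ENNReal.ofReal_rpow_of_pos hs.1, Real.enorm_eq_ofReal hs.1.le]
  have h2 : ∫⁻ s in Set.Ico (-1 : ℝ) 0, ‖s‖ₑ ^ r = ∫⁻ s in Set.Ioc (0 : ℝ) 1, ‖s‖ₑ ^ r := by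
    have := (Measure.measurePreserving_neg (volume : Measure ℝ)).setLIntegral_comp_preimage
      (s := Set.Ioc (0 : ℝ) 1) measurableSet_Ioc (f := fun s => ‖s‖ₑ ^ r) (by fun_prop)
    simpa using this
  have h3 : Set.Icc (-1 : ℝ) 1 ⊆ (Set.Ico (-1 : ℝ) 0 ∪ Set.Ioc 0 1) ∪ {0} := by
    intro s hs
    rcases lt_trichotomy s 0 with h | h | h
    · exact Or.inl (Or.inl ⟨hs.1, h⟩)
    · exact Or.inr h
    · exact Or.inl (Or.inr ⟨h, hs.2⟩)
  refine ne_top_of_le_ne_top ?_ ((lintegral_mono_set h3).trans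
    ((lintegral_union_le _ _ _).trans (add_le_add_left (lintegral_union_le _ _ _) _)))
  rw [h2]
  simp [h1]

lemma one_dim (m : ℕ) (q : ℝ) (hq : 1 ≤ q) : ∃ C : ℝ≥0, ∀ A : Set ℝ, MeasurableSet A →
    ∫⁻ s in A, ‖s‖ₑ ^ (((m + 1 : ℕ) : ℝ) / q - 1) ≤ C * (∫⁻ s in A, ‖s‖ₑ ^ m) ^ (1 / q) := by
  have hq0 : 0 < q := by linarith
  set n : ℝ := ((m + 1 : ℕ) : ℝ) with hn
  have hn0 : 0 < n := by positivity
  set r := n / q - 1 with hr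
  have hr1 : -1 < r := by have : 0 < n / q := by positivity
                          linarith
  have hfin := unit_int_finite r hr1
  set c0 := ∫⁻ s in Set.Icc (-1 : ℝ) 1, ‖s‖ₑ ^ r with hc0
  refine ⟨c0.toNNReal + 1, fun A hA => ?_⟩
  set M := ∫⁻ s in A, ‖s‖ₑ ^ m with hM
  push_cast
  rw [ENNReal.coe_toNNReal hfin]
  rcases eq_or_ne M ⊤ with hMt | hMt
  · rw [hMt, ENNReal.top_rpow_of_pos (by positivity), ENNReal.mul_top (by simp)]
    exact le_top
  rcases eq_or_ne M 0 with hM0 | hM0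
  · have : ∫⁻ s in A, ‖s‖ₑ ^ r = 0 := by
      rw [hM, lintegral_eq_zero_iff (by fun_prop)] at hM0
      rw [lintegral_eq_zero_iff (by fun_prop)]
      have h0 : ∀ᵐ t : ℝ, t ≠ 0 := by simp [ae_iff]
      filter_upwards [hM0, ae_restrict_of_ae h0] with s h1 h2
      simp only [Pi.zero_apply] at h1
      have := eq_zero_of_pow_eq_zero h1
      simp [h2] at this
    rw [this]; exact zero_le
  set R : ℝ := (M.toReal) ^ (1 / n) with hR
  have hMr : 0 < M.toReal := ENNReal.toReal_pos hM0 hMt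
  have hR0 : 0 < R := by positivity
  have hRM : ENNReal.ofReal R = M ^ (1 / n) := by
    rw [hR, ← ENNReal.ofReal_rpow_of_pos hMr, ENNReal.ofReal_toReal hMt]
  -- near part
  have near : ∫⁻ s in Set.Icc (-R) R, ‖s‖ₑ ^ r = c0 * M ^ (1 / q) := by
    rw [← lintegral_indicator measurableSet_Icc, hc0, ← lintegral_indicator measurableSet_Icc]
    rw [← lintegral_smul_real volume _ (by
      exact Measurable.indicator (by fun_prop) measurableSet_Icc) hR0.ne']
    have e : ∀ x : ℝ, (Set.Icc (-R) R).indicator (fun s => ‖s‖ₑ ^ r) (R • x) =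
        ‖R‖ₑ ^ r * (Set.Icc (-1 : ℝ) 1).indicator (fun s => ‖s‖ₑ ^ r) x := by
      intro x
      have hiff : R • x ∈ Set.Icc (-R) R ↔ x ∈ Set.Icc (-1 : ℝ) 1 := by
        simp only [Set.mem_Icc, smul_eq_mul]
        constructor
        · rintro ⟨h1, h2⟩; constructor <;> nlinarith
        · rintro ⟨h1, h2⟩; constructor <;> nlinarith
      by_cases hx : x ∈ Set.Icc (-1 : ℝ) 1
      · rw [Set.indicator_of_mem hx, Set.indicator_of_mem (hiff.2 hx), smul_eq_mul, enorm_mul,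
          ENNReal.mul_rpow_of_ne_top (by simp) (by simp)]
      · rw [Set.indicator_of_notMem hx, Set.indicator_of_notMem (fun h => hx (hiff.1 h)), mul_zero]
    simp_rw [e]
    rw [lintegral_const_mul _ (Measurable.indicator (by fun_prop) measurableSet_Icc), ← mul_assoc,
      mul_comm]
    congr 1
    rw [Real.enorm_eq_ofReal hR0.le, Module.finrank_self, pow_one, hRM, ← ENNReal.rpow_mul,
      ← ENNReal.rpow_add _ _ hM0 hMt]
    congr 1
    rw [hr]; field_simp; ring
  have far : ∫⁻ s in A ∩ (Set.Icc (-R) R)ᶜ, ‖s‖ₑ ^ r ≤ M ^ (1 / q) := by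
    have hle : ∀ s ∈ A ∩ (Set.Icc (-R) R)ᶜ, ‖s‖ₑ ^ r ≤ ENNReal.ofReal R ^ (n / q - n) * ‖s‖ₑ ^ m := by
      intro s hs
      have hsR : R < |s| := by
        by_contra h
        exact hs.2 (abs_le.1 (not_lt.1 h))
      have hs0 : ‖s‖ₑ ≠ 0 := by
        rw [enorm_ne_zero]; intro h; rw [h, abs_zero] at hsR; linarith
      have : ‖s‖ₑ ^ r = ‖s‖ₑ ^ (n / q - n) * ‖s‖ₑ ^ m := by
        rw [← ENNReal.rpow_natCast, ← ENNReal.rpow_add _ _ hs0 (by simp)]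
        congr 1
        rw [hr, hn]; push_cast; ring
      rw [this]
      gcongr ?_ * _
      have hexp : n / q - n = -(n - n / q) := by ring
      have hnn : n / q ≤ n := div_le_self hn0.le hq
      rw [hexp, ENNReal.rpow_neg, ENNReal.rpow_neg]
      apply ENNReal.inv_le_inv.2
      apply ENNReal.rpow_le_rpow _ (by linarith)
      rw [Real.enorm_eq_ofReal_abs]
      exact ENNReal.ofReal_le_ofReal hsR.le
    calc _ ≤ ∫⁻ s in A ∩ (Set.Icc (-R) R)ᶜ, ENNReal.ofReal R ^ (n / q - n) * ‖s‖ₑ ^ m :=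
          setLIntegral_mono' (hA.inter measurableSet_Icc.compl) hle
      _ ≤ ∫⁻ s in A, ENNReal.ofReal R ^ (n / q - n) * ‖s‖ₑ ^ m :=
          lintegral_mono_set Set.inter_subset_left
      _ = ENNReal.ofReal R ^ (n / q - n) * M := by
          rw [lintegral_const_mul _ (by fun_prop)]
      _ = M ^ (1 / q) := by
          rw [hRM, ← ENNReal.rpow_mul]
          nth_rewrite 2 [← ENNReal.rpow_one M]
          rw [← ENNReal.rpow_add _ _ hM0 hMt]
          congr 1
          field_simp; ring
  have hsub : A ⊆ Set.Icc (-R) R ∪ A ∩ (Set.Icc (-R) R)ᶜ := by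
    intro s hs
    by_cases h : s ∈ Set.Icc (-R) R
    · exact Or.inl h
    · exact Or.inr ⟨hs, h⟩
  calc _ ≤ _ := (lintegral_mono_set hsub).trans (lintegral_union_le _ _ _)
    _ ≤ c0 * M ^ (1 / q) + M ^ (1 / q) := by rw [near]; gcongr
    _ = _ := by ring

lemma continuous_extOp (m : ℕ) (g : Euc (m + 1) → ℂ) (hg : Integrable g (sphMeasure (m + 1))) :
    Continuous (extOp (m + 1) g) := by
  unfold extOp
  refine continuous_of_dominated (bound := fun ξ => ‖g ξ‖) ?_ ?_ hg.norm ?_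
  · intro s
    exact (Measurable.aestronglyMeasurable (by fun_prop)).mul hg.1
  · intro s
    refine Filter.Eventually.of_forall fun ξ => ?_
    rw [norm_mul, norm_exp_I_mul, one_mul]
  · refine Filter.Eventually.of_forall fun ξ => ?_
    fun_prop

lemma xray_le (m : ℕ) (g : Euc (m + 1) → ℂ) (hg : Integrable g (sphMeasure (m + 1)))
    (ω v : Euc (m + 1)) :
    xrayT (m + 1) (fun x => sqe (extOp (m + 1) g x)) ω v ≤
      ∫⁻ s : ℝ, ‖extOp (m + 1) (fun ξ => ((‖g ξ‖ : ℝ) : ℂ)) (s • ω)‖ₑ ^ 2 := by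
  have hh : Integrable (fun ξ => Complex.exp (Complex.I * (⟪v, ξ⟫ : ℝ)) * g ξ)
      (sphMeasure (m + 1)) := by
    refine hg.bdd_mul (c := 1) (Measurable.aestronglyMeasurable (by fun_prop)) ?_
    exact Filter.Eventually.of_forall fun z => (norm_exp_I_mul _).le
  have := majorant (sphMeasure (m + 1)) (fun ξ => ⟪ω, ξ⟫) (by fun_prop) _ hh
  refine (le_of_eq ?_).trans (this.trans (le_of_eq ?_))
  · unfold xrayT
    refine lintegral_congr fun s => ?_
    unfold sqe extOp
    beta_reduce
    rw [← enorm_eq_nnnorm]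
    congr 2
    refine integral_congr_ae (Filter.Eventually.of_forall fun ξ => ?_)
    simp only
    rw [← mul_assoc, ← Complex.exp_add, inner_add_left, real_inner_smul_left]
    congr 2
    push_cast
    ring
  · refine lintegral_congr fun s => ?_
    unfold extOp
    simp only [norm_mul, norm_exp_I_mul, one_mul, real_inner_smul_left]

lemma sq_layer (x : ℝ) (hx : 0 ≤ x) : ENNReal.ofReal x ^ 2 =
    ∫⁻ l in Set.Ioi (0 : ℝ), if l < x then ENNReal.ofReal (2 * l) else 0 := by
  have h1 : ∫⁻ l in Set.Ioi (0 : ℝ), (if l < x then ENNReal.ofReal (2 * l) else 0) =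
      ∫⁻ l in Set.Ioo 0 x, ENNReal.ofReal (2 * l) := by
    rw [← lintegral_indicator measurableSet_Ioi, ← lintegral_indicator measurableSet_Ioo]
    refine lintegral_congr fun l => ?_
    by_cases h : 0 < l <;> by_cases h' : l < x <;> simp [Set.indicator, h, h']
  rw [h1, setLIntegral_congr Ioo_ae_eq_Ioc, ← ofReal_integral_eq_lintegral_ofReal]
  · rw [← intervalIntegral.integral_of_le hx, ← ENNReal.ofReal_pow hx]
    congr 1
    rw [intervalIntegral.integral_const_mul, integral_id]
    ring
  · exact (Continuous.integrableOn_Ioc (by fun_prop))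
  · refine (ae_restrict_iff' measurableSet_Ioc).2 (Filter.Eventually.of_forall fun l hl => ?_)
    have := hl.1
    change (0 : ℝ) ≤ 2 * l
    positivity

/-- For `n ≥ 2` and `q ∈ [1,∞)`,
`‖ sup_{v ⊥ ω} X(|ĝdσ|²)(ω,v) ‖_{L^q_ω(𝕊^{n-1})}
  ≲ ‖ (|g|dσ)^∧(x) |x|^{1/2 - n/(2q)} ‖_{L^{2q,2}(ℝⁿ)}²`. -/
theorem xray_lorentz_reduction (n : ℕ) (hn : 2 ≤ n) (q : ℝ) (hq : 1 ≤ q) :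
    ∃ C : ℝ≥0, 0 < C ∧ ∀ g : Euc n → ℂ, Integrable g (sphMeasure n) →
      (∫⁻ ω, (⨆ v : {v : Euc n // ⟪ω, v⟫ = 0},
            xrayT n (fun x => sqe (extOp n g x)) ω v) ^ q ∂(sphMeasure n)) ^ (1 / q)
        ≤ C * lorentzNorm volume (2 * q) 2
            (fun x => extOp n (fun ξ => ((‖g ξ‖ : ℝ) : ℂ)) x *
              ((‖x‖ ^ ((1 : ℝ) / 2 - n / (2 * q)) : ℝ) : ℂ)) ^ 2 := by
  obtain ⟨m, rfl⟩ : ∃ m, n = m + 1 := ⟨n - 1, by omega⟩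
  have hq0 : 0 < q := by linarith
  obtain ⟨C1, hC1⟩ := one_dim m q hq
  obtain ⟨C2, hC2⟩ := polar_le m
  refine ⟨C1 * C2 ^ (1 / q) + 1, by positivity, fun g hg => ?_⟩
  set r : ℝ := ((m + 1 : ℕ) : ℝ) / q - 1 with hr
  set β : ℝ := (1 : ℝ) / 2 - ((m + 1 : ℕ) : ℝ) / (2 * q) with hβ
  have hrβ : r = - (2 * β) := by rw [hr, hβ]; field_simp; ring
  set G : Euc (m + 1) → ℂ := extOp (m + 1) (fun ξ => ((‖g ξ‖ : ℝ) : ℂ)) with hG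
  have hGc : Continuous G := continuous_extOp m _ hg.norm.ofReal
  set H : Euc (m + 1) → ℝ := fun x => ‖G x‖ * ‖x‖ ^ β with hH
  have hHm : Measurable H := by
    have := hGc.measurable
    fun_prop
  have hH0 : ∀ x, 0 ≤ H x := fun x => by positivity
  have hnorm : ∀ x, ‖G x * ((‖x‖ ^ β : ℝ) : ℂ)‖ = H x := by
    intro x
    rw [norm_mul, Complex.norm_real, Real.norm_of_nonneg (by positivity)]
  set K : ℝ → Euc (m + 1) → ℝ≥0∞ := fun l ω =>
    ∫⁻ s : ℝ, if l < H (s • ω) then ENNReal.ofReal (2 * l) * ‖s‖ₑ ^ r else 0 with hK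
  have hKm0 : Measurable fun z : (ℝ × Euc (m + 1)) × ℝ =>
      if z.1.1 < H (z.2 • z.1.2) then ENNReal.ofReal (2 * z.1.1) * ‖z.2‖ₑ ^ r else 0 := by
    refine Measurable.ite (measurableSet_lt (by fun_prop) (by fun_prop)) (by fun_prop) (by fun_prop)
  have hKm : Measurable (Function.uncurry K) := hKm0.lintegral_prod_right'
  -- pointwise bound on the sphere
  have hpt : ∀ ω ∈ sphere (0 : Euc (m + 1)) 1, (⨆ v : {v : Euc (m + 1) // ⟪ω, v⟫ = 0},
      xrayT (m + 1) (fun x => sqe (extOp (m + 1) g x)) ω v) ≤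
      ∫⁻ l in Set.Ioi (0 : ℝ), K l ω := by
    intro ω hω
    have hω1 : ‖ω‖ = 1 := by simpa using hω
    refine iSup_le fun v => (xray_le m g hg ω v).trans (le_of_eq ?_)
    rw [hK]
    simp only
    rw [lintegral_lintegral_swap (by
      apply Measurable.aemeasurable
      exact hKm0.comp (by fun_prop : Measurable fun z : ℝ × ℝ => ((z.1, ω), z.2)))]
    refine lintegral_congr_ae ?_
    have h0 : ∀ᵐ t : ℝ, t ≠ 0 := by simp [ae_iff]
    filter_upwards [h0] with s hs
    have e1 : ∀ l : ℝ, (if l < H (s • ω) then ENNReal.ofReal (2 * l) * ‖s‖ₑ ^ r else 0) =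
        (if l < H (s • ω) then ENNReal.ofReal (2 * l) else 0) * ‖s‖ₑ ^ r := by
      intro l; split_ifs <;> simp
    simp_rw [e1]
    have hnt : ‖s‖ₑ ^ r ≠ ⊤ := by simp [hs]
    rw [lintegral_mul_const' _ _ hnt, ← sq_layer _ (hH0 _)]
    simp only [hH]
    rw [ENNReal.ofReal_mul (norm_nonneg _), ofReal_norm, norm_smul, hω1, mul_one, mul_pow,
      mul_assoc, Real.norm_eq_abs, ← ENNReal.ofReal_rpow_of_pos (abs_pos.2 hs),
      ← Real.enorm_eq_ofReal_abs, ← ENNReal.rpow_natCast (‖s‖ₑ ^ β), ← ENNReal.rpow_mul,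
      ← ENNReal.rpow_add _ _ (by simpa using hs) (by simp), hrβ]
    have : β * ((2 : ℕ) : ℝ) + -(2 * β) = 0 := by push_cast; ring
    rw [this, ENNReal.rpow_zero, mul_one]
  -- bound for each level
  have hlev : ∀ l : ℝ, (∫⁻ ω, K l ω ^ q ∂(sphMeasure (m + 1))) ^ (1 / q) ≤
      ENNReal.ofReal (2 * l) * (C1 * C2 ^ (1 / q) * volume {x | l < H x} ^ (1 / q)) := by
    intro l
    have hE : MeasurableSet {x | l < H x} := measurableSet_lt measurable_const hHm
    have hb : ∀ ω, K l ω ^ q ≤ (ENNReal.ofReal (2 * l) * C1) ^ q *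
        ∫⁻ s : ℝ, {x | l < H x}.indicator 1 (s • ω) * ‖s‖ₑ ^ m := by
      intro ω
      have hA : MeasurableSet {s : ℝ | l < H (s • ω)} :=
        measurableSet_lt measurable_const (by fun_prop)
      have e1 : K l ω = ENNReal.ofReal (2 * l) * ∫⁻ s in {s : ℝ | l < H (s • ω)}, ‖s‖ₑ ^ r := by
        rw [← lintegral_const_mul _ (by fun_prop), ← lintegral_indicator hA]
        refine lintegral_congr fun s => ?_
        simp [Set.indicator]
      have e2 : ∫⁻ s : ℝ, {x | l < H x}.indicator 1 (s • ω) * ‖s‖ₑ ^ m =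
          ∫⁻ s in {s : ℝ | l < H (s • ω)}, ‖s‖ₑ ^ m := by
        rw [← lintegral_indicator hA]
        refine lintegral_congr fun s => ?_
        simp [Set.indicator]
      rw [e1, e2]
      calc _ ≤ (ENNReal.ofReal (2 * l) *
            (C1 * (∫⁻ s in {s : ℝ | l < H (s • ω)}, ‖s‖ₑ ^ m) ^ (1 / q))) ^ q := by
            gcongr
            exact hC1 _ hA
        _ = _ := by
            rw [← mul_assoc, ENNReal.mul_rpow_of_nonneg _ _ hq0.le, ← ENNReal.rpow_mul,
              one_div_mul_cancel hq0.ne', ENNReal.rpow_one]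
    have hp := hC2 ({x | l < H x}.indicator 1) (measurable_one.indicator hE)
    rw [lintegral_indicator_one hE] at hp
    calc _ ≤ ((ENNReal.ofReal (2 * l) * C1) ^ q * (C2 * volume {x | l < H x})) ^ (1 / q) := by
          gcongr
          refine (lintegral_mono hb).trans ?_
          rw [lintegral_const_mul' _ _ (ENNReal.rpow_ne_top_of_nonneg hq0.le
            (ENNReal.mul_ne_top ENNReal.ofReal_ne_top (by simp)))]
          gcongr
      _ = _ := by
          have : (0 : ℝ) ≤ 1 / q := by positivity
          rw [ENNReal.mul_rpow_of_nonneg _ _ this, ENNReal.mul_rpow_of_nonneg _ _ this,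
            ← ENNReal.rpow_mul, mul_one_div_cancel hq0.ne', ENNReal.rpow_one]
          ring
  have hsq : lorentzNorm volume (2 * q) 2 (fun x => G x * ((‖x‖ ^ β : ℝ) : ℂ)) ^ 2 =
      ENNReal.ofReal (2 * q) * ∫⁻ l in Set.Ioi (0 : ℝ),
        ENNReal.ofReal l * volume {x | l < H x} ^ (1 / q) := by
    unfold lorentzNorm
    rw [← ENNReal.rpow_natCast, ← ENNReal.rpow_mul]
    have : (1 : ℝ) / 2 * ((2 : ℕ) : ℝ) = 1 := by norm_num
    rw [this, ENNReal.rpow_one]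
    congr 1
    refine setLIntegral_congr_fun measurableSet_Ioi fun l hl => ?_
    have hl0 : (0 : ℝ) < l := hl
    simp only [hnorm]
    have e : (2 : ℝ) / (2 * q) = 1 / q := by field_simp
    have e' : ENNReal.ofReal l ^ (2 : ℝ) = ENNReal.ofReal l * ENNReal.ofReal l := by
      rw [← pow_two, ← ENNReal.rpow_natCast]; norm_num
    rw [e, e', mul_assoc, mul_comm, mul_div_assoc, ENNReal.div_self (by simpa using hl0)
      (by simp), mul_one]
  rw [hsq]
  have hcoe : ((C2 ^ (1 / q) : ℝ≥0) : ℝ≥0∞) = (C2 : ℝ≥0∞) ^ (1 / q) :=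
    (ENNReal.coe_rpow_of_nonneg _ (by positivity))
  calc _ ≤ (∫⁻ ω, (∫⁻ l in Set.Ioi (0 : ℝ), K l ω) ^ q ∂(sphMeasure (m + 1))) ^ (1 / q) := by
        gcongr ?_ ^ (1 / q)
        unfold sphMeasure
        refine setLIntegral_mono' isClosed_sphere.measurableSet fun ω hω => ?_
        exact ENNReal.rpow_le_rpow (hpt ω hω) hq0.le
    _ ≤ ∫⁻ l in Set.Ioi (0 : ℝ), (∫⁻ ω, K l ω ^ q ∂(sphMeasure (m + 1))) ^ (1 / q) :=
        minkowski_aux _ _ q hq K hKm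
    _ ≤ ∫⁻ l in Set.Ioi (0 : ℝ),
        ((C1 * C2 ^ (1 / q)) * ENNReal.ofReal (2 * q)) *
          (ENNReal.ofReal l * volume {x | l < H x} ^ (1 / q)) := by
        refine lintegral_mono fun l => (hlev l).trans ?_
        rw [ENNReal.ofReal_mul zero_le_two]
        have h2 : ENNReal.ofReal 2 ≤ ENNReal.ofReal (2 * q) := ENNReal.ofReal_le_ofReal (by linarith)
        calc _ = ((C1 * C2 ^ (1 / q)) * ENNReal.ofReal 2) *
              (ENNReal.ofReal l * volume {x | l < H x} ^ (1 / q)) := by ring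
          _ ≤ _ := by gcongr
    _ = (C1 * C2 ^ (1 / q)) * (ENNReal.ofReal (2 * q) * ∫⁻ l in Set.Ioi (0 : ℝ),
          ENNReal.ofReal l * volume {x | l < H x} ^ (1 / q)) := by
        rw [lintegral_const_mul', mul_assoc]
        refine ENNReal.mul_ne_top (ENNReal.mul_ne_top (by simp) ?_) ENNReal.ofReal_ne_top
        exact ENNReal.rpow_ne_top_of_nonneg (by positivity) (by simp)
    _ ≤ _ := by
        push_cast
        rw [hcoe]
        gcongr
        exact le_self_add
end
end

section
/- Let n = 2. There is a constant C such that for all δ ∈ (0, 1/2] and all nonnegative g₁, g₂ ∈ L¹(𝕊¹, dσ), ∫_{𝕊¹} BT_δ(g₁,g₂)(ω)^{1/2} dσ(ω) ≤ C log(1/δ) ‖g₁‖_{L¹(𝕊¹)}^{1/2} ‖g₂‖_{L¹(𝕊¹)}^{1/2}. Equivalently, ‖BT_δ(g₁,g₂)‖_{L^{1/2}(𝕊¹)} ≲ (log(1/δ))² ‖g₁‖_{L¹} ‖g₂‖_{L¹}. -/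
open MeasureTheory Metric Real
open scoped ENNReal NNReal RealInnerProductSpace

noncomputable section

/-- Reflection `R_ω(ξ) = ξ - 2(ξ·ω)ω` in the line `⟨ω⟩^⊥`. -/
def reflect (ω ξ : Euc 2) : Euc 2 := ξ - (2 * ⟪ξ, ω⟫) • ω

/-- The bilinear operator `BT_δ` for nonnegative (real-valued) inputs:
`BT_δ(g₁,g₂)(ω) = ∫_{𝕊¹} g₁(ξ) g₂(-R_ω(ξ)) / (|ω·ξ|+δ) dσ(ξ)`. -/
def BTnn (δ : ℝ) (g₁ g₂ : Euc 2 → ℝ) (ω : Euc 2) : ℝ≥0∞ :=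
  ∫⁻ ξ, ENNReal.ofReal (g₁ ξ * g₂ (-(reflect ω ξ))) /
    ENNReal.ofReal (|⟪ω, ξ⟫| + δ) ∂(sphMeasure 2)

instance circMS : MeasurableSpace Circle := borel Circle
instance circBorel : BorelSpace Circle := ⟨rfl⟩

instance circIso : IsIsometricSMul Circle Circle where
  isometry_smul c := by
    refine Isometry.of_dist_eq fun x y => ?_
    have h : ∀ a b : Circle, dist a b = ‖(a : ℂ) - b‖ := fun a b => dist_eq_norm (a : ℂ) b
    simp only [smul_eq_mul, h, Circle.coe_mul, ← mul_sub, norm_mul, Circle.norm_coe, one_mul]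

lemma circ_dist (a b : Circle) : dist a b = ‖(a : ℂ) - b‖ := dist_eq_norm (a : ℂ) b

/-- Arclength on the circle group. -/
abbrev muC : Measure Circle := μH[1]

lemma exp_lip : LipschitzWith 1 (fun t : ℝ => Circle.exp t) := by
  refine LipschitzWith.of_dist_le_mul fun x y => ?_
  rw [circ_dist, Circle.coe_exp, Circle.coe_exp]
  have h := Real.norm_exp_I_mul_ofReal_sub_one_le (x := x - y)
  have e : Complex.exp (x * Complex.I) - Complex.exp (y * Complex.I)
      = Complex.exp (y * Complex.I) * (Complex.exp (Complex.I * ((x - y : ℝ) : ℂ)) - 1) := by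
    rw [mul_sub, ← Complex.exp_add]; push_cast; ring_nf
  rw [e, norm_mul, Complex.norm_exp_ofReal_mul_I, one_mul, NNReal.coe_one, one_mul, Real.dist_eq,
    ← Real.norm_eq_abs]
  exact h

lemma muC_exp_le (a b : ℝ) : muC ((fun t : ℝ => Circle.exp t) '' Set.Icc a b)
    ≤ ENNReal.ofReal (b - a) := by
  refine (exp_lip.hausdorffMeasure_image_le zero_le_one _).trans ?_
  rw [hausdorffMeasure_real, Real.volume_Icc]; simp

lemma circ_im_abs_le {z : Circle} {ρ : ℝ} (h : |(z : ℂ).im| ≤ ρ) (h0 : 0 ≤ (z : ℂ).re) :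
    z ∈ (fun t : ℝ => Circle.exp t) '' Set.Icc (-(2 * ρ)) (2 * ρ) := by
  refine ⟨Complex.arg z, ?_, Circle.exp_arg z⟩
  have h1 := Complex.abs_arg_le_pi_div_two_iff.2 h0
  have h2 := Real.mul_abs_le_abs_sin h1
  rw [Complex.sin_arg, Circle.norm_coe, div_one] at h2
  have h3 : (1 / 2 : ℝ) ≤ 2 / π := by
    rw [div_le_div_iff₀ (by norm_num) Real.pi_pos]; linarith [Real.pi_le_four]
  have h4 : |Complex.arg z| ≤ 2 * ρ := by
    nlinarith [abs_nonneg (Complex.arg z), mul_le_mul_of_nonneg_right h3 (abs_nonneg (Complex.arg z))]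
  exact abs_le.1 h4

lemma muC_im_le (ρ : ℝ) (hρ : 0 ≤ ρ) : muC {z : Circle | |(z : ℂ).im| ≤ ρ} ≤ ENNReal.ofReal (8 * ρ) := by
  set A := (fun t : ℝ => Circle.exp t) '' Set.Icc (-(2 * ρ)) (2 * ρ)
  have hs : {z : Circle | |(z : ℂ).im| ≤ ρ} ⊆ A ∪ (fun z => (-1 : Circle) * z) ⁻¹' A := by
    intro z hz
    rcases le_total 0 (z : ℂ).re with h | h
    · exact Or.inl (circ_im_abs_le hz h)
    · refine Or.inr (circ_im_abs_le (z := (-1 : Circle) * z) ?_ ?_)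
      · simpa using hz
      · simpa using h
  refine (measure_mono hs).trans ((measure_union_le _ _).trans ?_)
  rw [measure_preimage_mul]
  have := muC_exp_le (-(2 * ρ)) (2 * ρ)
  refine (add_le_add this this).trans ?_
  rw [← ENNReal.ofReal_add (by linarith) (by linarith)]
  exact ENNReal.ofReal_le_ofReal (by linarith)

lemma muC_re_le (ρ : ℝ) (hρ : 0 ≤ ρ) : muC {z : Circle | |(z : ℂ).re| ≤ ρ} ≤ ENNReal.ofReal (8 * ρ) := by
  let i : Circle := ⟨Complex.I, by simp [Submonoid.unitSphere]⟩
  have hi : (i : ℂ) = Complex.I := rfl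
  have : {z : Circle | |(z : ℂ).re| ≤ ρ} = (fun z => i * z) ⁻¹' {z : Circle | |(z : ℂ).im| ≤ ρ} := by
    ext z; simp [hi]
  rw [this, measure_preimage_mul]
  exact muC_im_le ρ hρ

lemma le_muC_im (r : ℝ) (hr : 0 ≤ r) (h1 : r ≤ 1) :
    ENNReal.ofReal (2 * r) ≤ muC {z : Circle | |(z : ℂ).im| ≤ r} := by
  have hl : LipschitzWith 1 (fun z : Circle => (z : ℂ).im) := by
    refine LipschitzWith.of_dist_le_mul fun x y => ?_
    rw [circ_dist, Real.dist_eq, NNReal.coe_one, one_mul, ← Complex.sub_im]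
    exact Complex.abs_im_le_norm _
  have := hl.hausdorffMeasure_image_le zero_le_one {z : Circle | |(z : ℂ).im| ≤ r}
  rw [hausdorffMeasure_real] at this
  simp only [ENNReal.coe_one, ENNReal.one_rpow, one_mul] at this
  refine le_trans ?_ this
  have hs : Set.Icc (-r) r ⊆ (fun z : Circle => (z : ℂ).im) '' {z : Circle | |(z : ℂ).im| ≤ r} := by
    intro t ht
    have e : (Circle.exp (Real.arcsin t) : ℂ).im = t := by
      rw [Circle.coe_exp, Complex.exp_ofReal_mul_I_im, Real.sin_arcsin (by linarith [ht.1]) (by linarith [ht.2])]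
    refine ⟨Circle.exp (Real.arcsin t), ?_, e⟩
    simp only [Set.mem_ofPred_eq, e]
    exact abs_le.2 ht
  refine le_trans ?_ (measure_mono hs)
  rw [Real.volume_Icc]
  exact ENNReal.ofReal_le_ofReal (by linarith)

lemma circ_im_le_one (z : Circle) : |(z : ℂ).im| ≤ 1 := by
  exact (Complex.abs_im_le_norm (z : ℂ)).trans_eq (Circle.norm_coe z)

lemma circ_re_le_one (z : Circle) : |(z : ℂ).re| ≤ 1 := by
  exact (Complex.abs_re_le_norm (z : ℂ)).trans_eq (Circle.norm_coe z)

lemma univ_eq_im : (Set.univ : Set Circle) = {z : Circle | |(z : ℂ).im| ≤ 1} := by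
  ext z; simpa using circ_im_le_one z

instance muC_haar : (muC).IsHaarMeasure := by
  refine Measure.isHaarMeasure_of_isCompact_nonempty_interior _ Set.univ isCompact_univ
    (by simp) ?_ ?_
  · rw [univ_eq_im]
    have := le_muC_im 1 zero_le_one le_rfl
    intro h
    rw [h] at this
    simp at this
  · rw [univ_eq_im]
    exact ((muC_im_le 1 zero_le_one).trans_lt ENNReal.ofReal_lt_top).ne

lemma sq_mp : MeasurePreserving (fun z : Circle => z ^ 2) muC muC := by
  refine (powMonoidHom (α := Circle) 2).measurePreserving (μ := muC) (ν := muC) (continuous_pow 2) ?_ rfl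
  intro z
  refine ⟨Circle.exp (Complex.arg z / 2), ?_⟩
  simp only [powMonoidHom_apply]
  rw [sq, ← Circle.exp_add, add_halves, Circle.exp_arg]

lemma cs_half {f g : Circle → ℝ≥0∞} (hf : Measurable f) (hg : Measurable g) :
    ∫⁻ x, f x ^ ((1 : ℝ) / 2) * g x ^ ((1 : ℝ) / 2) ∂muC
      ≤ (∫⁻ x, f x ∂muC) ^ ((1 : ℝ) / 2) * (∫⁻ x, g x ∂muC) ^ ((1 : ℝ) / 2) := by
  have h := ENNReal.lintegral_mul_le_Lp_mul_Lq muC Real.HolderConjugate.two_two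
    (f := fun x => f x ^ ((1 : ℝ) / 2)) (g := fun x => g x ^ ((1 : ℝ) / 2))
    (hf.pow_const _).aemeasurable (hg.pow_const _).aemeasurable
  have e : ∀ y : ℝ≥0∞, (y ^ ((1 : ℝ) / 2)) ^ (2 : ℝ) = y := fun y => by
    rw [← ENNReal.rpow_mul]; norm_num
  simpa only [e, Pi.mul_apply] using h

/-- Indicator of the set where the real part is small. -/
def kS (r : ℝ) : Circle → ℝ≥0∞ := {z : Circle | |(z : ℂ).re| ≤ r}.indicator 1
/-- Indicator of the set where the imaginary part is small. -/
def kT (r : ℝ) : Circle → ℝ≥0∞ := {z : Circle | |(z : ℂ).im| ≤ r}.indicator 1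

lemma measSet_S (r : ℝ) : MeasurableSet {z : Circle | |(z : ℂ).re| ≤ r} :=
  (isClosed_le (by fun_prop) (by fun_prop)).measurableSet

lemma measSet_T (r : ℝ) : MeasurableSet {z : Circle | |(z : ℂ).im| ≤ r} :=
  (isClosed_le (by fun_prop) (by fun_prop)).measurableSet

@[fun_prop]
lemma meas_kS (r : ℝ) : Measurable (kS r) := measurable_one.indicator (measSet_S r)
@[fun_prop]
lemma meas_kT (r : ℝ) : Measurable (kT r) := measurable_one.indicator (measSet_T r)

lemma int_kS (r : ℝ) : ∫⁻ z, kS r z ∂muC = muC {z : Circle | |(z : ℂ).re| ≤ r} :=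
  lintegral_indicator_one (measSet_S r)
lemma int_kT (r : ℝ) : ∫⁻ z, kT r z ∂muC = muC {z : Circle | |(z : ℂ).im| ≤ r} :=
  lintegral_indicator_one (measSet_T r)

lemma kT_mul_kS_le (r : ℝ) (z w : Circle) :
    kT r z * kS r w ≤ kS (2 * r) (z / w) * kS (2 * r) (z * w) := by
  by_cases hz : |(z : ℂ).im| ≤ r
  swap
  · simp [kT, hz]
  by_cases hw : |(w : ℂ).re| ≤ r
  swap
  · simp [kS, hw]
  have h1 : |(z : ℂ).re * (w : ℂ).re| ≤ r := by
    rw [abs_mul]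
    exact (mul_le_of_le_one_left (abs_nonneg _) (circ_re_le_one z)).trans hw
  have h2 : |(z : ℂ).im * (w : ℂ).im| ≤ r := by
    rw [abs_mul]
    exact (mul_le_of_le_one_right (abs_nonneg _) (circ_im_le_one w)).trans hz
  rw [abs_le] at h1 h2
  have a1 : |((z / w : Circle) : ℂ).re| ≤ 2 * r := by
    rw [div_eq_mul_inv, Circle.coe_mul, Circle.coe_inv_eq_conj, Complex.mul_re, Complex.conj_re,
      Complex.conj_im, abs_le]
    constructor <;> linarith
  have a2 : |((z * w : Circle) : ℂ).re| ≤ 2 * r := by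
    rw [Circle.coe_mul, Complex.mul_re, abs_le]
    constructor <;> linarith
  simp only [kT, kS]
  rw [Set.indicator_of_mem (by exact hz), Set.indicator_of_mem (by exact hw),
    Set.indicator_of_mem (by exact a1), Set.indicator_of_mem (by exact a2)]
  simp

/-- The single scale operator. -/
def BB (r : ℝ) (h₁ h₂ : Circle → ℝ≥0∞) (ω : Circle) : ℝ≥0∞ :=
  ∫⁻ ξ, kS r (ω / ξ) * (h₁ ξ * h₂ (ω ^ 2 / ξ)) ∂muC

lemma meas_BB (r : ℝ) {h₁ h₂ : Circle → ℝ≥0∞} (m₁ : Measurable h₁) (m₂ : Measurable h₂) :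
    Measurable (BB r h₁ h₂) := by
  unfold BB
  apply Measurable.lintegral_prod_right
  fun_prop

lemma local_BB (r : ℝ) {h₁ h₂ : Circle → ℝ≥0∞} (m₁ : Measurable h₁) (m₂ : Measurable h₂)
    (a : Circle) :
    ∫⁻ ω, kT r (ω / a) * BB r h₁ h₂ ω ∂muC
      ≤ (∫⁻ ξ, kS (2 * r) (ξ / a) * h₁ ξ ∂muC) * (∫⁻ ξ, kS (2 * r) (ξ / a) * h₂ ξ ∂muC) := by
  calc ∫⁻ ω, kT r (ω / a) * BB r h₁ h₂ ω ∂muC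
      = ∫⁻ ω, ∫⁻ ξ, kT r (ω / a) * (kS r (ω / ξ) * (h₁ ξ * h₂ (ω ^ 2 / ξ))) ∂muC ∂muC := by
        refine lintegral_congr fun ω => ?_
        rw [BB, lintegral_const_mul]
        fun_prop
    _ ≤ ∫⁻ ω, ∫⁻ ξ, (kS (2 * r) (ξ / a) * h₁ ξ) *
          (kS (2 * r) (ω ^ 2 / ξ / a) * h₂ (ω ^ 2 / ξ)) ∂muC ∂muC := by
        refine lintegral_mono fun ω => lintegral_mono fun ξ => ?_
        have h := kT_mul_kS_le r (ω / a) (ω / ξ)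
        have e1 : ω / a / (ω / ξ) = ξ / a := by
          simp only [div_eq_mul_inv, mul_inv, inv_inv]
          calc ω * a⁻¹ * (ω⁻¹ * ξ) = (ω * ω⁻¹) * (ξ * a⁻¹) := by ac_rfl
            _ = _ := by simp
        have e2 : ω / a * (ω / ξ) = ω ^ 2 / ξ / a := by
          simp only [div_eq_mul_inv, sq]; ac_rfl
        rw [e1, e2] at h
        calc kT r (ω / a) * (kS r (ω / ξ) * (h₁ ξ * h₂ (ω ^ 2 / ξ)))
            = (kT r (ω / a) * kS r (ω / ξ)) * (h₁ ξ * h₂ (ω ^ 2 / ξ)) := by ring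
          _ ≤ (kS (2 * r) (ξ / a) * kS (2 * r) (ω ^ 2 / ξ / a)) * (h₁ ξ * h₂ (ω ^ 2 / ξ)) := by
            gcongr
          _ = _ := by ring
    _ = ∫⁻ ξ, ∫⁻ ω, (kS (2 * r) (ξ / a) * h₁ ξ) *
          (kS (2 * r) (ω ^ 2 / ξ / a) * h₂ (ω ^ 2 / ξ)) ∂muC ∂muC := by
        apply lintegral_lintegral_swap
        apply Measurable.aemeasurable
        unfold Function.uncurry
        fun_prop
    _ = ∫⁻ ξ, (kS (2 * r) (ξ / a) * h₁ ξ) * (∫⁻ η, kS (2 * r) (η / a) * h₂ η ∂muC) ∂muC := by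
        refine lintegral_congr fun ξ => ?_
        rw [lintegral_const_mul _ (by fun_prop)]
        congr 1
        rw [sq_mp.lintegral_comp (f := fun η => kS (2 * r) (η / ξ / a) * h₂ (η / ξ)) (by fun_prop)]
        exact lintegral_div_right_eq_self (fun η => kS (2 * r) (η / a) * h₂ η) ξ
    _ = _ := by
        rw [lintegral_mul_const]
        fun_prop

lemma int_G (r : ℝ) {h : Circle → ℝ≥0∞} (m : Measurable h) :
    ∫⁻ a, ∫⁻ ξ, kS r (ξ / a) * h ξ ∂muC ∂muC
      = muC {z : Circle | |(z : ℂ).re| ≤ r} * ∫⁻ ξ, h ξ ∂muC := by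
  rw [lintegral_lintegral_swap (by
    apply Measurable.aemeasurable
    unfold Function.uncurry
    fun_prop)]
  rw [← lintegral_const_mul _ m]
  refine lintegral_congr fun ξ => ?_
  rw [lintegral_mul_const _ (by fun_prop), lintegral_div_left_eq_self (kS r) ξ, int_kS]

lemma kT_half (r : ℝ) (z : Circle) : kT r z ^ ((1 : ℝ) / 2) = kT r z := by
  by_cases hz : |(z : ℂ).im| ≤ r <;> simp [kT, hz]

lemma single_scale0 (r : ℝ) (hr : 0 < r) (hr1 : r ≤ 1) {h₁ h₂ : Circle → ℝ≥0∞}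
    (m₁ : Measurable h₁) (m₂ : Measurable h₂) :
    muC {z : Circle | |(z : ℂ).im| ≤ r} ^ ((1 : ℝ) / 2) *
      ∫⁻ ω, BB r h₁ h₂ ω ^ ((1 : ℝ) / 2) ∂muC
      ≤ muC {z : Circle | |(z : ℂ).re| ≤ 2 * r} *
        ((∫⁻ ξ, h₁ ξ ∂muC) ^ ((1 : ℝ) / 2) * (∫⁻ ξ, h₂ ξ ∂muC) ^ ((1 : ℝ) / 2)) := by
  set m := muC {z : Circle | |(z : ℂ).im| ≤ r} with hm
  set M := muC {z : Circle | |(z : ℂ).re| ≤ 2 * r} with hM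
  have mB := meas_BB r m₁ m₂
  have hm0 : m ≠ 0 := by
    have := le_muC_im r hr.le hr1
    intro h
    rw [← hm, h] at this
    simp at this
    linarith
  have hmt : m ≠ ⊤ := ((muC_im_le r hr.le).trans_lt ENNReal.ofReal_lt_top).ne
  have ph0 : m ^ ((1 : ℝ) / 2) ≠ 0 := by simp [hm0, hmt]
  have pht : m ^ ((1 : ℝ) / 2) ≠ ⊤ := by simp [hmt]
  have half : ∀ x : ℝ≥0∞, x ^ ((1 : ℝ) / 2) * x ^ ((1 : ℝ) / 2) = x := fun x => by
    rw [← ENNReal.rpow_add_of_nonneg _ _ (by norm_num) (by norm_num)]; norm_num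
  rw [← ENNReal.mul_le_mul_iff_right ph0 pht, ← mul_assoc, half]
  have mG : ∀ {h : Circle → ℝ≥0∞}, Measurable h →
      Measurable fun a => ∫⁻ ξ, kS (2 * r) (ξ / a) * h ξ ∂muC := fun mh => by
    apply Measurable.lintegral_prod_right
    fun_prop
  calc m * ∫⁻ ω, BB r h₁ h₂ ω ^ ((1 : ℝ) / 2) ∂muC
      = ∫⁻ ω, ∫⁻ a, kT r (ω / a) * BB r h₁ h₂ ω ^ ((1 : ℝ) / 2) ∂muC ∂muC := by
        rw [← lintegral_const_mul _ (by fun_prop)]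
        refine lintegral_congr fun ω => ?_
        rw [lintegral_mul_const _ (by fun_prop), lintegral_div_left_eq_self (kT r) ω, int_kT]
    _ = ∫⁻ a, ∫⁻ ω, kT r (ω / a) * BB r h₁ h₂ ω ^ ((1 : ℝ) / 2) ∂muC ∂muC := by
        apply lintegral_lintegral_swap
        apply Measurable.aemeasurable
        unfold Function.uncurry
        fun_prop
    _ ≤ ∫⁻ a, m ^ ((1 : ℝ) / 2) * ((∫⁻ ξ, kS (2 * r) (ξ / a) * h₁ ξ ∂muC) ^ ((1 : ℝ) / 2) *
          (∫⁻ ξ, kS (2 * r) (ξ / a) * h₂ ξ ∂muC) ^ ((1 : ℝ) / 2)) ∂muC := by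
        refine lintegral_mono fun a => ?_
        calc ∫⁻ ω, kT r (ω / a) * BB r h₁ h₂ ω ^ ((1 : ℝ) / 2) ∂muC
            = ∫⁻ ω, kT r (ω / a) ^ ((1 : ℝ) / 2) *
                (kT r (ω / a) * BB r h₁ h₂ ω) ^ ((1 : ℝ) / 2) ∂muC := by
              refine lintegral_congr fun ω => ?_
              rw [ENNReal.mul_rpow_of_nonneg _ _ (by norm_num), ← mul_assoc, half, ]
          _ ≤ (∫⁻ ω, kT r (ω / a) ∂muC) ^ ((1 : ℝ) / 2) *
                (∫⁻ ω, kT r (ω / a) * BB r h₁ h₂ ω ∂muC) ^ ((1 : ℝ) / 2) :=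
              cs_half (by fun_prop) (by fun_prop)
          _ ≤ _ := by
              rw [lintegral_div_right_eq_self (kT r) a, int_kT]
              refine mul_le_mul' le_rfl ?_
              rw [← ENNReal.mul_rpow_of_nonneg _ _ (by norm_num)]
              exact ENNReal.rpow_le_rpow (local_BB r m₁ m₂ a) (by norm_num)
    _ ≤ m ^ ((1 : ℝ) / 2) * ((M * ∫⁻ ξ, h₁ ξ ∂muC) ^ ((1 : ℝ) / 2) *
          (M * ∫⁻ ξ, h₂ ξ ∂muC) ^ ((1 : ℝ) / 2)) := by
        have hG₁ := mG m₁
        have hG₂ := mG m₂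
        rw [lintegral_const_mul _ (by fun_prop)]
        gcongr
        refine (cs_half (mG m₁) (mG m₂)).trans ?_
        rw [int_G _ m₁, int_G _ m₂]
    _ = _ := by
        rw [ENNReal.mul_rpow_of_nonneg _ _ (by norm_num),
          ENNReal.mul_rpow_of_nonneg _ _ (by norm_num)]
        congr 1
        rw [mul_mul_mul_comm, half]

lemma single_scale (r : ℝ) (hr : 0 < r) (hr1 : r ≤ 1) {h₁ h₂ : Circle → ℝ≥0∞}
    (m₁ : Measurable h₁) (m₂ : Measurable h₂) :
    ∫⁻ ω, (ENNReal.ofReal (2 / r) * BB r h₁ h₂ ω) ^ ((1 : ℝ) / 2) ∂muC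
      ≤ 16 *
        ((∫⁻ ξ, h₁ ξ ∂muC) ^ ((1 : ℝ) / 2) * (∫⁻ ξ, h₂ ξ ∂muC) ^ ((1 : ℝ) / 2)) := by
  have h := single_scale0 r hr hr1 m₁ m₂
  set N := ((∫⁻ ξ, h₁ ξ ∂muC) ^ ((1 : ℝ) / 2) * (∫⁻ ξ, h₂ ξ ∂muC) ^ ((1 : ℝ) / 2))
  have mB := meas_BB r m₁ m₂
  simp only [ENNReal.mul_rpow_of_nonneg _ _ (show (0:ℝ) ≤ 1 / 2 by norm_num)]
  rw [lintegral_const_mul _ (by fun_prop)]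
  set X := ∫⁻ ω, BB r h₁ h₂ ω ^ ((1 : ℝ) / 2) ∂muC
  have h2 : ENNReal.ofReal (2 * r) ^ ((1 : ℝ) / 2) * X ≤ ENNReal.ofReal (16 * r) * N := by
    refine le_trans ?_ (h.trans ?_)
    · gcongr
      exact le_muC_im r hr.le hr1
    · gcongr
      refine (muC_re_le (2 * r) (by linarith)).trans (ENNReal.ofReal_le_ofReal (by linarith))
  have e : ENNReal.ofReal (2 / r) ^ ((1 : ℝ) / 2)
      = ENNReal.ofReal (1 / r) * ENNReal.ofReal (2 * r) ^ ((1 : ℝ) / 2) := by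
    rw [ENNReal.ofReal_rpow_of_nonneg (by positivity) (by norm_num),
      ENNReal.ofReal_rpow_of_nonneg (by positivity) (by norm_num),
      ← ENNReal.ofReal_mul (by positivity), ← Real.sqrt_eq_rpow, ← Real.sqrt_eq_rpow]
    congr 1
    have : 2 / r = (1 / r) ^ 2 * (2 * r) := by field_simp
    rw [this, Real.sqrt_mul (by positivity), Real.sqrt_sq (by positivity)]
  rw [e, mul_assoc]
  calc ENNReal.ofReal (1 / r) * (ENNReal.ofReal (2 * r) ^ ((1 : ℝ) / 2) * X)
      ≤ ENNReal.ofReal (1 / r) * (ENNReal.ofReal (16 * r) * N) := by gcongr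
    _ = 16 * N := by
      rw [← mul_assoc, ← ENNReal.ofReal_mul (by positivity)]
      congr 1
      have : 1 / r * (16 * r) = 16 := by field_simp
      rw [this]; simp

lemma kernel_dyadic (K : ℕ) (w : Circle) (h : (1 / 2 : ℝ) ^ K < |(w : ℂ).re|) :
    ENNReal.ofReal (1 / |(w : ℂ).re|)
      ≤ ∑ j ∈ Finset.range K, ENNReal.ofReal (2 / (1 / 2 : ℝ) ^ j) * kS ((1 / 2 : ℝ) ^ j) w := by
  induction K with
  | zero => exact absurd h (by simpa using circ_re_le_one w)
  | succ K ih =>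
    rw [Finset.sum_range_succ]
    by_cases hK : (1 / 2 : ℝ) ^ K < |(w : ℂ).re|
    · exact (ih hK).trans le_self_add
    · push Not at hK
      refine le_trans ?_ le_add_self
      rw [kS, Set.indicator_of_mem (by exact hK), Pi.one_apply, mul_one]
      apply ENNReal.ofReal_le_ofReal
      have hp : (0 : ℝ) < (1 / 2 : ℝ) ^ K := by positivity
      rw [div_le_div_iff₀ (lt_trans (by positivity) h) hp]
      rw [pow_succ] at h
      linarith

lemma kernel_le (K : ℕ) (δ : ℝ) (hδ : (1 / 2 : ℝ) ^ K ≤ δ) (w : Circle) :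
    (ENNReal.ofReal (|(w : ℂ).re| + δ))⁻¹
      ≤ ∑ j ∈ Finset.range (K + 1),
        ENNReal.ofReal (2 / (1 / 2 : ℝ) ^ j) * kS ((1 / 2 : ℝ) ^ j) w := by
  have hp : (0 : ℝ) < (1 / 2 : ℝ) ^ K := by positivity
  have ha := abs_nonneg (w : ℂ).re
  rw [← ENNReal.ofReal_inv_of_pos (by linarith)]
  by_cases h : (1 / 2 : ℝ) ^ K < |(w : ℂ).re|
  · rw [Finset.sum_range_succ]
    refine le_trans ?_ ((kernel_dyadic K w h).trans le_self_add)
    apply ENNReal.ofReal_le_ofReal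
    rw [← one_div]
    exact one_div_le_one_div_of_le (by linarith) (by linarith)
  · push Not at h
    rw [Finset.sum_range_succ]
    refine le_trans ?_ le_add_self
    rw [kS, Set.indicator_of_mem (by exact h), Pi.one_apply, mul_one]
    apply ENNReal.ofReal_le_ofReal
    rw [← one_div, div_le_div_iff₀ (by linarith) hp]
    linarith

lemma sum_half_le (s : Finset ℕ) (f : ℕ → ℝ≥0∞) :
    (∑ j ∈ s, f j) ^ ((1 : ℝ) / 2) ≤ ∑ j ∈ s, f j ^ ((1 : ℝ) / 2) := by
  induction s using Finset.induction_on with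
  | empty => simp
  | insert a s ha ih =>
    rw [Finset.sum_insert ha, Finset.sum_insert ha]
    refine (ENNReal.rpow_add_le_add_rpow _ _ (by norm_num) (by norm_num)).trans ?_
    gcongr

lemma circle_bound (K : ℕ) (δ : ℝ) (hδ : (1 / 2 : ℝ) ^ K ≤ δ) {h₁ h₂ : Circle → ℝ≥0∞}
    (m₁ : Measurable h₁) (m₂ : Measurable h₂) :
    ∫⁻ ω : Circle, (∫⁻ ξ : Circle, h₁ ξ * h₂ (ω ^ 2 / ξ) /
        ENNReal.ofReal (|((ω / ξ : Circle) : ℂ).re| + δ) ∂muC) ^ ((1 : ℝ) / 2) ∂muC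
      ≤ (K + 1 : ℕ) * (16 *
        ((∫⁻ ξ, h₁ ξ ∂muC) ^ ((1 : ℝ) / 2) * (∫⁻ ξ, h₂ ξ ∂muC) ^ ((1 : ℝ) / 2))) := by
  have mB := fun r => meas_BB r m₁ m₂
  calc _ ≤ ∫⁻ ω : Circle, ∑ j ∈ Finset.range (K + 1),
        (ENNReal.ofReal (2 / (1 / 2 : ℝ) ^ j) * BB ((1 / 2 : ℝ) ^ j) h₁ h₂ ω) ^ ((1 : ℝ) / 2) ∂muC := by
        refine lintegral_mono fun ω => ?_
        refine le_trans ?_ (sum_half_le _ _)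
        gcongr
        simp only [BB]
        calc _ ≤ ∫⁻ ξ : Circle, ∑ j ∈ Finset.range (K + 1), ENNReal.ofReal (2 / (1 / 2 : ℝ) ^ j) *
              (kS ((1 / 2 : ℝ) ^ j) (ω / ξ) * (h₁ ξ * h₂ (ω ^ 2 / ξ))) ∂muC := by
              refine lintegral_mono fun ξ => ?_
              simp only [← mul_assoc]
              rw [div_eq_mul_inv, mul_comm]
              simp only [mul_assoc]
              have := kernel_le K δ hδ (ω / ξ)
              refine (mul_le_mul_left this _).trans ?_
              rw [Finset.sum_mul]
              simp only [mul_assoc]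
              exact le_rfl
          _ = _ := by
              rw [lintegral_finsetSum _ (fun j _ => by fun_prop)]
              refine Finset.sum_congr rfl fun j _ => ?_
              rw [lintegral_const_mul _ (by fun_prop)]
    _ = ∑ j ∈ Finset.range (K + 1), ∫⁻ ω : Circle,
        (ENNReal.ofReal (2 / (1 / 2 : ℝ) ^ j) * BB ((1 / 2 : ℝ) ^ j) h₁ h₂ ω) ^ ((1 : ℝ) / 2) ∂muC := by
        rw [lintegral_finsetSum _ (fun j _ => by fun_prop)]
    _ ≤ ∑ j ∈ Finset.range (K + 1), (16 *
        ((∫⁻ ξ, h₁ ξ ∂muC) ^ ((1 : ℝ) / 2) * (∫⁻ ξ, h₂ ξ ∂muC) ^ ((1 : ℝ) / 2))) := by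
        refine Finset.sum_le_sum fun j _ => ?_
        exact single_scale _ (by positivity) (pow_le_one₀ (by norm_num) (by norm_num)) m₁ m₂
    _ = _ := by rw [Finset.sum_const, Finset.card_range, nsmul_eq_mul]

/-- The standard isometric embedding of the circle group onto the unit circle. -/
def EE (z : Circle) : Euc 2 := Complex.orthonormalBasisOneI.repr (z : ℂ)

lemma EE_iso : Isometry EE := by
  refine Isometry.of_dist_eq fun x y => ?_
  rw [EE, EE, LinearIsometryEquiv.dist_map, circ_dist, dist_eq_norm]

lemma EE_range : Set.range EE = sphere (0 : Euc 2) 1 := by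
  ext x
  constructor
  · rintro ⟨z, rfl⟩
    simpa [EE] using Circle.norm_coe z
  · intro hx
    have hx' : ‖x‖ = 1 := by simpa using hx
    have hn : ‖Complex.orthonormalBasisOneI.repr.symm x‖ = 1 := by
      rw [LinearIsometryEquiv.norm_map, hx']
    refine ⟨⟨Complex.orthonormalBasisOneI.repr.symm x, ?_⟩, ?_⟩
    · rw [Submonoid.unitSphere]
      simpa using hn
    · exact Complex.orthonormalBasisOneI.repr.apply_symm_apply x

lemma EE_map : sphMeasure 2 = Measure.map EE muC := by
  rw [EE_iso.map_hausdorffMeasure (Or.inl zero_le_one), EE_range, sphMeasure]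
  norm_num

lemma EE_emb : MeasurableEmbedding EE := EE_iso.isClosedEmbedding.measurableEmbedding

lemma lint_sph (f : Euc 2 → ℝ≥0∞) : ∫⁻ x, f x ∂(sphMeasure 2) = ∫⁻ z, f (EE z) ∂muC := by
  rw [EE_map, EE_emb.lintegral_map]

lemma EE_inner (ω ξ : Circle) : ⟪EE ω, EE ξ⟫ = ((ω / ξ : Circle) : ℂ).re := by
  rw [EE, EE, LinearIsometryEquiv.inner_map_map, Complex.inner, div_eq_mul_inv, Circle.coe_mul,
    Circle.coe_inv_eq_conj]
  simp
  ring

lemma EE_reflect (ω ξ : Circle) : -(reflect (EE ω) (EE ξ)) = EE (ω ^ 2 / ξ) := by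
  rw [reflect, EE_inner, EE, EE, EE, ← map_smul, ← map_sub, ← map_neg]
  congr 1
  have h : (ω : ℂ) * (starRingEnd ℂ) (ω : ℂ) = 1 := by
    rw [Complex.mul_conj, Circle.normSq_coe]; simp
  simp only [div_eq_mul_inv, Circle.coe_mul, Circle.coe_pow, Circle.coe_inv_eq_conj,
    Complex.real_smul]
  have e := Complex.add_conj ((ξ : ℂ) * (starRingEnd ℂ) (ω : ℂ))
  push_cast at e ⊢
  rw [← e, map_mul, Complex.conj_conj]
  linear_combination (ξ : ℂ) * h

lemma exists_K (δ : ℝ) (h0 : 0 < δ) (h1 : δ ≤ 1 / 2) :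
    ∃ K : ℕ, (1 / 2 : ℝ) ^ K ≤ δ ∧ ((K + 1 : ℕ) : ℝ) ≤ 6 * Real.log (1 / δ) := by
  have hl2 : (1 / 2 : ℝ) ≤ Real.log 2 := by linarith [Real.log_two_gt_d9]
  have hle : Real.log 2 ≤ Real.log (1 / δ) := by
    apply Real.log_le_log (by norm_num)
    rw [le_div_iff₀ h0]; linarith
  refine ⟨⌈Real.log (1 / δ) / Real.log 2⌉₊, ?_, ?_⟩
  · have hc := Nat.le_ceil (Real.log (1 / δ) / Real.log 2)
    rw [div_le_iff₀ (by linarith)] at hc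
    rw [← Real.log_le_log_iff (by positivity) h0, Real.log_pow]
    have e1 : Real.log (1 / 2) = -Real.log 2 := by rw [one_div, Real.log_inv]
    have e2 : Real.log (1 / δ) = -Real.log δ := by rw [one_div, Real.log_inv]
    rw [e1]
    linarith
  · have hc := Nat.ceil_lt_add_one (a := Real.log (1 / δ) / Real.log 2)
      (div_nonneg (by linarith) (by linarith))
    have : Real.log (1 / δ) / Real.log 2 ≤ 2 * Real.log (1 / δ) := by
      rw [div_le_iff₀ (by linarith)]
      nlinarith
    push_cast
    linarith

/-- For nonnegative `g₁, g₂ ∈ L¹(𝕊¹)` and `δ ∈ (0,1/2]`: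
`∫_{𝕊¹} BT_δ(g₁,g₂)(ω)^{1/2} dσ(ω) ≤ C log(1/δ) ‖g₁‖_{L¹}^{1/2} ‖g₂‖_{L¹}^{1/2}`. -/
theorem BT_L_half_bound :
    ∃ C : ℝ≥0, 0 < C ∧ ∀ δ : ℝ, 0 < δ → δ ≤ 1 / 2 →
      ∀ g₁ g₂ : Euc 2 → ℝ, (∀ x, 0 ≤ g₁ x) → (∀ x, 0 ≤ g₂ x) →
        Integrable g₁ (sphMeasure 2) → Integrable g₂ (sphMeasure 2) →
          (∫⁻ ω, BTnn δ g₁ g₂ ω ^ ((1 : ℝ) / 2) ∂(sphMeasure 2))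
            ≤ C * ENNReal.ofReal (Real.log (1 / δ)) *
              (∫⁻ ξ, ENNReal.ofReal (g₁ ξ) ∂(sphMeasure 2)) ^ ((1 : ℝ) / 2) *
              (∫⁻ ξ, ENNReal.ofReal (g₂ ξ) ∂(sphMeasure 2)) ^ ((1 : ℝ) / 2) := by
  refine ⟨96, by norm_num, ?_⟩
  intro δ hδ0 hδ1 g₁ g₂ p₁ _ i₁ i₂
  obtain ⟨K, hK, hK6⟩ := exists_K δ hδ0 hδ1
  have ae : ∀ g : Euc 2 → ℝ, Integrable g (sphMeasure 2) →
      AEMeasurable (fun z => ENNReal.ofReal (g (EE z))) muC := by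
    intro g hg
    rw [EE_map] at hg
    exact (hg.aestronglyMeasurable.comp_measurable
      EE_emb.measurable).aemeasurable.ennreal_ofReal
  obtain ⟨h₁, m₁, e₁⟩ := ae g₁ i₁
  obtain ⟨h₂, m₂, e₂⟩ := ae g₂ i₂
  have hb : ∀ ω : Circle, BTnn δ g₁ g₂ (EE ω) = ∫⁻ ξ : Circle, h₁ ξ * h₂ (ω ^ 2 / ξ) /
        ENNReal.ofReal (|((ω / ξ : Circle) : ℂ).re| + δ) ∂muC := by
    intro ω
    rw [BTnn, lint_sph]
    have q := (Measure.measurePreserving_div_left muC (ω ^ 2)).quasiMeasurePreserving.ae e₂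
    refine lintegral_congr_ae ?_
    filter_upwards [e₁, q] with ξ k₁ k₂
    rw [EE_reflect, EE_inner, ENNReal.ofReal_mul (p₁ _), k₁, k₂]
  rw [lint_sph, lint_sph, lint_sph, lintegral_congr_ae e₁, lintegral_congr_ae e₂]
  simp only [hb]
  refine (circle_bound K δ hK m₁ m₂).trans ?_
  have hc : ((K + 1 : ℕ) : ℝ≥0∞) ≤ 6 * ENNReal.ofReal (Real.log (1 / δ)) := by
    rw [← ENNReal.ofReal_natCast, ← ENNReal.ofReal_ofNat 6, ← ENNReal.ofReal_mul (by norm_num)]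
    exact ENNReal.ofReal_le_ofReal hK6
  refine (mul_le_mul_left hc _).trans (le_of_eq ?_)
  have : ((96 : ℝ≥0) : ℝ≥0∞) = 6 * 16 := by norm_num
  rw [this]
  ring
end
end
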